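/- arXiv:1901.10472 — 6 statements merged into one kernel-verified Lean document; each statement's English description precedes it below -/
import Mathlib

section
/- Let m₁, m₂, m₃, m₄ ∈ ℝ³ be non-coplanar points, let M be the 4×4 matrix whose j-th column is (m_j, 1), and let M̃ ∈ ℝ^{3×4} be the upper 3×4 block of (M⁻¹)ᵀ. Then for every point s ∈ ℝ³, writing d_i := ‖s − m_i‖², one has s = (1/2) · M̃ · (‖m₁‖² − d₁, ‖m₂‖² − d₂, ‖m₃‖² − d₃, ‖m₄‖² − d₄)ᵀ. -/
open scoped RealInnerProductSpace

noncomputable section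

abbrev E3 := EuclideanSpace ℝ (Fin 3)

/-- The 4×4 matrix whose j-th column is `(m j, 1)`. -/
def micMatrix (m : Fin 4 → E3) : Matrix (Fin 4) (Fin 4) ℝ :=
  fun i j => if h : (i : ℕ) < 3 then m j ⟨(i : ℕ), h⟩ else 1

/-- The upper 3×4 block of `(M⁻¹)ᵀ`. -/
def micMatrixTilde (m : Fin 4 → E3) : Matrix (Fin 3) (Fin 4) ℝ :=
  fun i j => ((micMatrix m)⁻¹).transpose i.castSucc j

/-!
Expanding the square, `‖mⱼ‖² - ‖s - mⱼ‖² = 2⟪s, mⱼ⟫ - ‖s‖²` is affine in `mⱼ`, hence equal to the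
product of the row vector `(2s, -‖s‖²)` with the column `(mⱼ, 1)`. So the data are the entries of
`(2s, -‖s‖²) M`, and multiplying by `M⁻¹` on the right recovers `2s` in the leading coordinates.
The matrix `M` is invertible because a linear relation between the columns `(mⱼ, 1)` is
the same thing as a relation between the `mⱼ` whose weights sum to zero.
-/

open Matrix

section HomogeneousMatrix

variable {n : ℕ} {ι R K : Type*}

/-- The matrix of homogeneous coordinates of a family of points `p` of affine `n`-space: its `j`-th
column is `(p j, 1)`. It is `micMatrix` in arbitrary dimension, over arbitrary scalars and for a
family of any size. The coordinate `1` comes last. -/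
def homogeneousMatrix [One R] (p : ι → Fin n → R) : Matrix (Fin (n + 1)) ι R :=
  .of fun i j => Fin.snoc (α := fun _ => R) (p j) 1 i

@[simp]
theorem homogeneousMatrix_castSucc [One R] (p : ι → Fin n → R) (i : Fin n) (j : ι) :
    homogeneousMatrix p i.castSucc j = p j i :=
  Fin.snoc_castSucc (α := fun _ => R) 1 (p j) i

@[simp]
theorem homogeneousMatrix_last [One R] (p : ι → Fin n → R) (j : ι) :
    homogeneousMatrix p (Fin.last n) j = 1 :=
  Fin.snoc_last (α := fun _ => R) 1 (p j)

theorem sum_smul_col_homogeneousMatrix_eq_zero_iff [Ring R] (p : ι → Fin n → R)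
    (t : Finset ι) (w : ι → R) :
    ∑ j ∈ t, w j • (homogeneousMatrix p).col j = 0 ↔
      ∑ j ∈ t, w j = 0 ∧ ∑ j ∈ t, w j • p j = 0 := by
  simp [funext_iff, Fin.forall_fin_succ', and_comm]

theorem linearIndependent_col_homogeneousMatrix_iff [Ring R] {p : ι → Fin n → R} :
    LinearIndependent R (homogeneousMatrix p).col ↔ AffineIndependent R p := by
  simp only [linearIndependent_iff', affineIndependent_iff,
    sum_smul_col_homogeneousMatrix_eq_zero_iff, and_imp]

theorem isUnit_homogeneousMatrix_iff [Field K] {p : Fin (n + 1) → Fin n → K} :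
    IsUnit (homogeneousMatrix p) ↔ AffineIndependent K p :=
  linearIndependent_cols_iff_isUnit.symm.trans linearIndependent_col_homogeneousMatrix_iff

theorem snoc_vecMul_homogeneousMatrix [NonAssocSemiring R] (p : ι → Fin n → R)
    (x : Fin n → R) (c : R) (j : ι) :
    (Fin.snoc (α := fun _ => R) x c ᵥ* homogeneousMatrix p) j = x ⬝ᵥ p j + c := by
  simp [vecMul, dotProduct, Fin.sum_univ_castSucc]

end HomogeneousMatrix

theorem norm_sq_sub_norm_sub_sq {V : Type*} [SeminormedAddCommGroup V] [InnerProductSpace ℝ V]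
    (s x : V) : ‖x‖ ^ 2 - ‖s - x‖ ^ 2 = 2 * ⟪s, x⟫ - ‖s‖ ^ 2 := by
  rw [norm_sub_sq_real]
  ring

section EuclideanSpace

variable {n : ℕ}

theorem snoc_vecMul_homogeneousMatrix_eq_norm_sq_sub {ι : Type*}
    (p : ι → EuclideanSpace ℝ (Fin n)) (s : EuclideanSpace ℝ (Fin n)) :
    Fin.snoc (α := fun _ => ℝ) (2 • s.ofLp) (-‖s‖ ^ 2) ᵥ* homogeneousMatrix (fun j => (p j).ofLp) =
      fun j => ‖p j‖ ^ 2 - ‖s - p j‖ ^ 2 := by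
  funext j
  rw [snoc_vecMul_homogeneousMatrix, norm_sq_sub_norm_sub_sq,
    EuclideanSpace.inner_eq_star_dotProduct, star_trivial, smul_dotProduct, dotProduct_comm,
    nsmul_eq_mul, Nat.cast_ofNat, sub_eq_add_neg]

theorem isUnit_homogeneousMatrix_ofLp_iff {p : Fin (n + 1) → EuclideanSpace ℝ (Fin n)} :
    IsUnit (homogeneousMatrix fun j => (p j).ofLp) ↔ AffineIndependent ℝ p :=
  isUnit_homogeneousMatrix_iff.trans
    (WithLp.linearEquiv 2 ℝ (Fin n → ℝ)).toAffineEquiv.affineIndependent_iff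

theorem mirror_point_from_distances_general {p : Fin (n + 1) → EuclideanSpace ℝ (Fin n)}
    (hp : AffineIndependent ℝ p) (s : EuclideanSpace ℝ (Fin n)) {d : Fin (n + 1) → ℝ}
    (hd : ∀ j, d j = ‖s - p j‖ ^ 2) (k : Fin n) :
    s k = (1 / 2) * (((homogeneousMatrix fun j => (p j).ofLp)⁻¹ᵀ.submatrix Fin.castSucc id) *ᵥ
      fun j => ‖p j‖ ^ 2 - d j) k := by
  set M := homogeneousMatrix fun j => (p j).ofLp
  set u : Fin (n + 1) → ℝ := Fin.snoc (2 • s.ofLp) (-‖s‖ ^ 2)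
  have hM : IsUnit M.det := M.isUnit_iff_isUnit_det.mp (isUnit_homogeneousMatrix_ofLp_iff.mpr hp)
  have data_eq : (fun j => ‖p j‖ ^ 2 - d j) = u ᵥ* M := by
    simp only [hd, u, M, snoc_vecMul_homogeneousMatrix_eq_norm_sq_sub]
  have recover : M⁻¹ᵀ *ᵥ (u ᵥ* M) = u := by
    rw [mulVec_transpose, vecMul_vecMul, mul_nonsing_inv M hM, vecMul_one]
  calc s k = (1 / 2) * u k.castSucc := by simp [u]
    _ = (1 / 2) * (M⁻¹ᵀ *ᵥ fun j => ‖p j‖ ^ 2 - d j) k.castSucc := by rw [data_eq, recover]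

end EuclideanSpace

theorem micMatrix_eq_homogeneousMatrix (m : Fin 4 → E3) :
    micMatrix m = homogeneousMatrix fun j => (m j).ofLp :=
  rfl

theorem micMatrixTilde_eq_submatrix (m : Fin 4 → E3) :
    micMatrixTilde m =
      (homogeneousMatrix fun j => (m j).ofLp)⁻¹ᵀ.submatrix Fin.castSucc id := by
  rw [← micMatrix_eq_homogeneousMatrix]
  rfl

/-- For non-coplanar microphones `m₁,…,m₄`, any point `s` is recovered from the squared
distances `dᵢ = ‖s - mᵢ‖²` via `s = (1/2) · M̃ · (‖mᵢ‖² - dᵢ)ᵢ`. -/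
theorem mirror_point_from_distances (m : Fin 4 → E3) (hm : AffineIndependent ℝ m)
    (s : E3) (d : Fin 4 → ℝ) (hd : ∀ i, d i = ‖s - m i‖ ^ 2) :
    ∀ k : Fin 3,
      s k = (1 / 2) * (micMatrixTilde m).mulVec (fun j => ‖m j‖ ^ 2 - d j) k := by
  rw [micMatrixTilde_eq_submatrix]
  exact mirror_point_from_distances_general hm s hd

end
end

section
/- Let s, L, m ∈ ℝ³ with s ≠ L and ⟨s − L, s − m⟩ ≠ 0, and set τ := ‖s − L‖² / (2⟨s − L, s − m⟩). Then 0 < τ < 1 holds if and only if ⟨m, s − L⟩ < (1/2)⟨s + L, s − L⟩, i.e., if and only if m lies strictly on the same side as L of the plane {x : ⟨x, s − L⟩ = (1/2)⟨s + L, s − L⟩} (note that ⟨L, s − L⟩ < (1/2)⟨s + L, s − L⟩ always holds). -/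
open scoped RealInnerProductSpace

noncomputable section

/-!
With `N = ‖s - L‖²` and `D = 2⟪s - L, s - m⟫`, the number `τ` solves `τ * D = N`. Since `N > 0`,
it lies in `(0, 1)` exactly when `N < D`, and expanding inner products shows that the latter says
that `m` lies on the stated side of the plane. For `m = L` it reads `N < 2 * N`.
-/

theorem pos_and_lt_one_iff_mul_lt_of_mul_pos {R : Type*} [Semiring R] [LinearOrder R]
    [IsStrictOrderedRing R] {t b : R} (htb : 0 < t * b) : (0 < t ∧ t < 1) ↔ t * b < b := by
  constructor
  · rintro ⟨ht_pos, ht_lt_one⟩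
    have hb_pos : 0 < b := pos_of_mul_pos_right htb ht_pos.le
    exact mul_lt_of_lt_one_left hb_pos ht_lt_one
  · intro hlt
    have hb_pos : 0 < b := htb.trans hlt
    exact ⟨pos_of_mul_pos_left htb hb_pos.le, (mul_lt_iff_lt_one_left hb_pos).mp hlt⟩

section InnerProductSpace

variable {E : Type*} [NormedAddCommGroup E] [InnerProductSpace ℝ E]

theorem inner_lt_half_inner_add_sub_iff (s L x : E) :
    ⟪x, s - L⟫ < (1 / 2) * ⟪s + L, s - L⟫ ↔ ‖s - L‖ ^ 2 < 2 * ⟪s - L, s - x⟫ := by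
  have expansion :
      2 * ⟪s - L, s - x⟫ - ‖s - L‖ ^ 2 = 2 * ((1 / 2) * ⟪s + L, s - L⟫ - ⟪x, s - L⟫) := by
    rw [← real_inner_self_eq_norm_sq, real_inner_comm (s - x)]
    simp only [inner_sub_left, inner_add_left]
    ring
  constructor <;> intro hlt <;> linarith

theorem inner_lt_half_inner_add_sub {s L : E} (hsL : s ≠ L) :
    ⟪L, s - L⟫ < (1 / 2) * ⟪s + L, s - L⟫ := by
  rw [inner_lt_half_inner_add_sub_iff, real_inner_self_eq_norm_sq]
  exact lt_two_mul_self (pow_pos (norm_sub_pos_iff.mpr hsL) 2)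

theorem tau_in_unit_interval_iff_general (s L m : E) (hsL : s ≠ L)
    (h : ⟪s - L, s - m⟫ ≠ 0)
    (τ : ℝ) (hτ : τ = ‖s - L‖ ^ 2 / (2 * ⟪s - L, s - m⟫)) :
    ((0 < τ ∧ τ < 1) ↔ ⟪m, s - L⟫ < (1 / 2) * ⟪s + L, s - L⟫) ∧
      ⟪L, s - L⟫ < (1 / 2) * ⟪s + L, s - L⟫ := by
  have hτ_mul : τ * (2 * ⟪s - L, s - m⟫) = ‖s - L‖ ^ 2 :=
    (eq_div_iff (mul_ne_zero two_ne_zero h)).mp hτ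
  have hτ_mul_pos : 0 < τ * (2 * ⟪s - L, s - m⟫) :=
    hτ_mul ▸ pow_pos (norm_sub_pos_iff.mpr hsL) 2
  refine ⟨?_, inner_lt_half_inner_add_sub hsL⟩
  rw [inner_lt_half_inner_add_sub_iff, ← hτ_mul]
  exact pos_and_lt_one_iff_mul_lt_of_mul_pos hτ_mul_pos

end InnerProductSpace

/-- With `τ = ‖s-L‖²/(2⟨s-L, s-m⟩)`, one has `0 < τ < 1` iff `m` lies strictly on the same
side as `L` of the plane `{x : ⟨x, s-L⟩ = (1/2)⟨s+L, s-L⟩}`; moreover `L` always lies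
strictly on that side. -/
theorem tau_in_unit_interval_iff (s L m : E3) (hsL : s ≠ L)
    (h : ⟪s - L, s - m⟫ ≠ 0)
    (τ : ℝ) (hτ : τ = ‖s - L‖ ^ 2 / (2 * ⟪s - L, s - m⟫)) :
    ((0 < τ ∧ τ < 1) ↔ ⟪m, s - L⟫ < (1 / 2) * ⟪s + L, s - L⟫) ∧
      ⟪L, s - L⟫ < (1 / 2) * ⟪s + L, s - L⟫ :=
  tau_in_unit_interval_iff_general s L m hsL h τ hτ

end
end

section
/- Let m₁, m₂, m₃, m₄ ∈ ℝ³ be non-coplanar points, let L, s ∈ ℝ³ with s ≠ L, and suppose ⟨s − L, s − m_i⟩ ≠ 0 for i = 1,…,4. Set τ_i := ‖s − L‖² / (2⟨s − L, s − m_i⟩) and x_i := (1 − τ_i)s + τ_i m_i. Then the four points x₁, x₂, x₃, x₄ are not collinear (they do not all lie on a common line). -/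
open scoped RealInnerProductSpace

noncomputable section

/-!
Since `τᵢ ≠ 0`, the point `mᵢ` lies in the affine span of `s` and `xᵢ`. If the `xᵢ` lay on a line,
that line together with `s` would span at most a plane, and this plane would contain every `mᵢ`.
-/

section AffineSpace

variable {k V P ι : Type*} [DivisionRing k] [AddCommGroup V] [Module k V] [AddTorsor V P]

theorem coplanar_of_subset_affineSpan {s t : Set P} (ht : Coplanar k t)
    (hst : s ⊆ affineSpan k t) : Coplanar k s := by
  have hspan : vectorSpan k s ≤ vectorSpan k t := by
    simpa only [direction_affineSpan] using AffineSubspace.direction_le (affineSpan_le.2 hst)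
  exact (Submodule.rank_mono hspan).trans ht

theorem affineIndependent_iff_not_coplanar {p : Fin 4 → P} :
    AffineIndependent k p ↔ ¬Coplanar k (Set.range p) := by
  rw [coplanar_iff_finrank_le_two,
    affineIndependent_iff_not_finrank_vectorSpan_le k p (Fintype.card_fin 4)]

theorem mem_affineSpan_pair_lineMap {r : k} (hr : r ≠ 0) (p q : P) :
    q ∈ line[k, p, AffineMap.lineMap p q r] := by
  simpa [AffineMap.lineMap_lineMap_right, hr] using
    AffineMap.lineMap_mem_affineSpan_pair r⁻¹ p (AffineMap.lineMap p q r)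

theorem wall_points_not_collinear_general {m : ι → P} (hm : ¬Coplanar k (Set.range m)) (s : P)
    {τ : ι → k} (hτ : ∀ i, τ i ≠ 0) :
    ¬Collinear k (Set.range fun i ↦ AffineMap.lineMap s (m i) (τ i)) := by
  intro hx
  refine hm (coplanar_of_subset_affineSpan (hx.coplanar_insert s) ?_)
  rintro _ ⟨i, rfl⟩
  refine affineSpan_mono k ?_ (mem_affineSpan_pair_lineMap (hτ i) s (m i))
  exact Set.insert_subset_insert (Set.singleton_subset_iff.2 ⟨i, rfl⟩)

end AffineSpace

theorem norm_sq_div_two_mul_inner_ne_zero {V : Type*} [NormedAddCommGroup V]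
    [InnerProductSpace ℝ V] {v w : V} (h : ⟪v, w⟫ ≠ 0) : ‖v‖ ^ 2 / (2 * ⟪v, w⟫) ≠ 0 := by
  have hv : v ≠ 0 := fun hv ↦ h (hv ▸ inner_zero_left w)
  exact div_ne_zero (pow_ne_zero 2 (norm_ne_zero_iff.2 hv)) (mul_ne_zero two_ne_zero h)

/-- For non-coplanar microphones, the four points `xᵢ = (1-τᵢ)s + τᵢmᵢ` with
`τᵢ = ‖s-L‖²/(2⟨s-L, s-mᵢ⟩)` are not collinear. -/
theorem wall_points_not_collinear (m : Fin 4 → E3) (hm : AffineIndependent ℝ m)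
    (L s : E3) (hsL : s ≠ L) (h : ∀ i, ⟪s - L, s - m i⟫ ≠ 0)
    (τ : Fin 4 → ℝ) (hτ : ∀ i, τ i = ‖s - L‖ ^ 2 / (2 * ⟪s - L, s - m i⟫))
    (x : Fin 4 → E3) (hx : ∀ i, x i = (1 - τ i) • s + τ i • m i) :
    ¬ Collinear ℝ (Set.range x) := by
  have hτ₀ (i) : τ i ≠ 0 := hτ i ▸ norm_sq_div_two_mul_inner_ne_zero (h i)
  simpa only [AffineMap.lineMap_apply_module, ← hx] using
    wall_points_not_collinear_general (affineIndependent_iff_not_coplanar.1 hm) s hτ₀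

end
end

section
/- Let s₁, s₂, s₃, s₄ ∈ ℝ³ be four points that are not all equal, and let m₁^ini, m₂^ini, m₃^ini, m₄^ini ∈ ℝ³ be non-coplanar points. Then there exist a rotation R ∈ SO(3) and a translation t ∈ ℝ³ such that, setting m_i := R m_i^ini + t for i = 1,…,4, one has f_M(‖s₁ − m₁‖², ‖s₂ − m₂‖², ‖s₃ − m₃‖², ‖s₄ − m₄‖²) ≠ 0, where f_M is formed from the pairwise squared distances of m₁,…,m₄. -/
open scoped RealInnerProductSpace

noncomputable section

/-- The polynomial `f_M` given by the Cayley–Menger-type determinant formed from the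
pairwise squared distances `D i j = ‖m i - m j‖²` between the four microphones. -/
def fM (m : Fin 4 → E3) (u : Fin 4 → ℝ) : ℝ :=
  let d : Fin 4 → Fin 4 → ℝ := fun i j => ‖m i - m j‖ ^ 2
  Matrix.det !![0,   u 0,   u 1,   u 2,   u 3,   1;
                u 0, d 0 0, d 0 1, d 0 2, d 0 3, 1;
                u 1, d 1 0, d 1 1, d 1 2, d 1 3, 1;
                u 2, d 2 0, d 2 1, d 2 2, d 2 3, 1;
                u 3, d 3 0, d 3 1, d 3 2, d 3 3, 1;
                1,   1,     1,     1,     1,     0]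

/-!
If `m` is affinely independent and `fM m u = 0`, a kernel vector of the bordered matrix gives
barycentric weights of a point `x` with `u i = ‖x - m i‖ ^ 2` for all `i`. Suppose this happens
with `u i = ‖s i - (R (m i) + t)‖ ^ 2` for every rotation `R` and translation `t`. Moving `t` along
a line in direction `w`, the point `x` moves affinely, and comparing the coefficients quadratic in
the parameter gives `‖v‖ ^ 2 = 2 * ⟪R v, w⟫`, where `v` is determined by
`⟪v, m i - m j⟫ = ⟪w, s i - s j⟫` and so does not depend on `R`. The identity and the half-turns
about the coordinate axes sum to zero, so summing over these four rotations gives `v = 0`; thus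
every `w` is orthogonal to every `s i - s j`.
-/

section InnerProductSpace

variable {ι V : Type*} [NormedAddCommGroup V] [InnerProductSpace ℝ V]

section Barycenter

variable [Fintype ι]

lemma sum_mul_norm_sub_sq_eq_norm_sub_sum_smul_sq_add {w : ι → ℝ} (hw : ∑ i, w i = 1)
    (m : ι → V) (y : V) :
    ∑ i, w i * ‖y - m i‖ ^ 2 =
      ‖y - ∑ i, w i • m i‖ ^ 2 + ∑ i, w i * ‖(∑ j, w j • m j) - m i‖ ^ 2 := by
  set x := ∑ i, w i • m i with hx
  have deviations_cancel : ∑ i, w i * ⟪y - x, x - m i⟫ = 0 := by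
    simp_rw [← real_inner_smul_right, ← inner_sum, smul_sub, Finset.sum_sub_distrib,
      ← Finset.sum_smul, hw, one_smul, ← hx, sub_self, inner_zero_right]
  calc ∑ i, w i * ‖y - m i‖ ^ 2
      = ∑ i, (w i * ‖y - x‖ ^ 2 + 2 * (w i * ⟪y - x, x - m i⟫) + w i * ‖x - m i‖ ^ 2) := by
        refine Finset.sum_congr rfl fun i _ => ?_
        rw [← sub_add_sub_cancel y x (m i), norm_add_sq_real]
        ring
    _ = ‖y - x‖ ^ 2 + ∑ i, w i * ‖x - m i‖ ^ 2 := by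
        rw [Finset.sum_add_distrib, Finset.sum_add_distrib, ← Finset.sum_mul, ← Finset.mul_sum,
          hw, deviations_cancel, one_mul, mul_zero, add_zero]

lemma eq_zero_of_forall_sum_mul_norm_sub_sq_eq {m : ι → V} (hm : AffineIndependent ℝ m)
    {q : ι → ℝ} (hq : ∑ i, q i = 0) {c : ℝ} (h : ∀ i, ∑ j, q j * ‖m i - m j‖ ^ 2 = c) :
    q = 0 := by
  have sum_smul_eq_zero : ∑ i, q i • m i = 0 := by
    rw [← inner_self_eq_zero (𝕜 := ℝ), inner_sum_smul_sum_smul_of_sum_eq_zero m hq m hq]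
    simp_rw [← sq, mul_assoc, ← Finset.mul_sum, h, ← Finset.sum_mul, hq]
    simp
  exact funext fun i => hm.eq_zero_of_sum_eq_zero hq sum_smul_eq_zero i (Finset.mem_univ i)

lemma norm_sum_smul_sub_sq_eq {w : ι → ℝ} (hw : ∑ i, w i = 1) {m : ι → V} {u : ι → ℝ} {c : ℝ}
    (hu : ∀ i, u i = ∑ j, w j * ‖m i - m j‖ ^ 2 + c) (hwu : ∑ i, w i * u i = -c) (i : ι) :
    ‖(∑ j, w j • m j) - m i‖ ^ 2 = u i := by
  set x := ∑ i, w i • m i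
  set moment := ∑ i, w i * ‖x - m i‖ ^ 2 with moment_def
  have hu' (i : ι) : u i = ‖x - m i‖ ^ 2 + moment + c := by
    rw [hu, sum_mul_norm_sub_sq_eq_norm_sub_sum_smul_sq_add hw m, norm_sub_rev (m i)]
  have moment_eq : moment + (moment + c) = -c := by
    rw [← hwu]
    simp_rw [hu', mul_add, Finset.sum_add_distrib, ← Finset.sum_mul, hw, one_mul]
    rw [← moment_def, add_assoc]
  linarith [hu' i]

lemma exists_norm_sub_sq_eq_of_bordered_kernel {m : ι → V} (hm : AffineIndependent ℝ m)
    {u q : ι → ℝ} {p r : ℝ} (hne : ¬(p = 0 ∧ q = 0 ∧ r = 0)) (hfirst : ∑ j, q j * u j + r = 0)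
    (hmid : ∀ i, p * u i + ∑ j, q j * ‖m i - m j‖ ^ 2 + r = 0) (hlast : p + ∑ j, q j = 0) :
    ∃ x : V, ∀ i, ‖x - m i‖ ^ 2 = u i := by
  have hp : p ≠ 0 := by
    rintro rfl
    have hq : q = 0 := eq_zero_of_forall_sum_mul_norm_sub_sq_eq hm (c := -r) (by linarith)
      fun i => by linarith [hmid i]
    exact hne ⟨rfl, hq, by simpa [hq] using hfirst⟩
  refine ⟨_, norm_sum_smul_sub_sq_eq (w := fun i => -q i / p) (c := -r / p) ?_ (fun i => ?_) ?_⟩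
  · rw [← Finset.sum_div, Finset.sum_neg_distrib, div_eq_one_iff_eq hp]
    linarith
  · simp_rw [div_mul_eq_mul_div, ← Finset.sum_div, neg_mul, Finset.sum_neg_distrib]
    field_simp
    linarith [hmid i]
  · simp_rw [div_mul_eq_mul_div, ← Finset.sum_div, neg_mul, Finset.sum_neg_distrib]
    field_simp
    linarith

end Barycenter

lemma eq_zero_of_forall_inner_sub_eq_zero (b : AffineBasis ι ℝ V) {y : V}
    (h : ∀ i j, ⟪y, b i - b j⟫ = 0) : y = 0 := by
  have top_le : (⊤ : Submodule ℝ V) ≤ LinearMap.ker (innerₛₗ ℝ y) := by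
    rw [← AffineSubspace.vectorSpan_eq_top_of_affineSpan_eq_top ℝ V V b.tot, vectorSpan_def,
      Submodule.span_le]
    rintro _ ⟨_, ⟨i, rfl⟩, _, ⟨j, rfl⟩, rfl⟩
    exact h i j
  exact inner_self_eq_zero.mp (top_le (Submodule.mem_top (x := y)))

lemma exists_forall_inner_sub_eq_sub [Finite ι] (b : AffineBasis ι ℝ V) (c : ι → ℝ) :
    ∃ v : V, ∀ i j, ⟪v, b i - b j⟫ = c i - c j := by
  classical
  cases nonempty_fintype ι
  have := b.finiteDimensional
  let f : V →ᵃ[ℝ] ℝ := (Fintype.linearCombination ℝ c).toAffineMap.comp b.coords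
  have f_apply (j : ι) : f (b j) = c j := by
    simp [f, Fintype.linearCombination_apply, b.coord_apply]
  refine ⟨(InnerProductSpace.toDual ℝ V).symm f.linear.toContinuousLinearMap, fun i j => ?_⟩
  rw [InnerProductSpace.toDual_symm_apply, LinearMap.coe_toContinuousLinearMap', ← vsub_eq_sub,
    f.linearMap_vsub, f_apply, f_apply, vsub_eq_sub]

lemma norm_eq_norm_of_forall_norm_add_smul_eq {x y v w : V}
    (h : ∀ a : ℝ, ‖x + a • v‖ = ‖y + a • w‖) : ‖v‖ = ‖w‖ := by
  have norm_add : ‖x + v‖ = ‖y + w‖ := by simpa using h 1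
  have norm_sub : ‖x - v‖ = ‖y - w‖ := by simpa [← sub_eq_add_neg] using h (-1)
  have norm_base : ‖x‖ = ‖y‖ := by simpa using h 0
  have hx := parallelogram_law_with_norm ℝ x v
  have hy := parallelogram_law_with_norm ℝ y w
  rw [norm_add, norm_sub, norm_base] at hx
  exact (sq_eq_sq₀ (norm_nonneg v) (norm_nonneg w)).mp (by linarith)

lemma eq_add_smul_of_forall_norm_sub_eq (b : AffineBasis ι ℝ V) {p : ι → V} {v w : V}
    (hv : ∀ i j, ⟪v, b i - b j⟫ = ⟪w, p i - p j⟫) {x₀ x : V} {a : ℝ}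
    (hx₀ : ∀ i, ‖p i - b i‖ = ‖x₀ - b i‖) (hx : ∀ i, ‖p i + a • w - b i‖ = ‖x - b i‖) :
    x = x₀ + a • (w - v) := by
  have inner_displacement (i : ι) :
      2 * ⟪x - x₀, b i⟫ = ‖x‖ ^ 2 - ‖x₀‖ ^ 2 - 2 * a * ⟪w, p i - b i⟫ - ‖a • w‖ ^ 2 := by
    have hsq : ‖x - b i‖ ^ 2 = ‖x₀ - b i‖ ^ 2 + 2 * a * ⟪w, p i - b i⟫ + ‖a • w‖ ^ 2 := by
      rw [← hx, ← hx₀, ← sub_add_eq_add_sub, norm_add_sq_real, real_inner_smul_right,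
        real_inner_comm, mul_assoc]
    rw [norm_sub_sq_real, norm_sub_sq_real] at hsq
    rw [inner_sub_left]
    linarith
  refine sub_eq_zero.mp (eq_zero_of_forall_inner_sub_eq_zero b fun i j => ?_)
  have hvij := hv i j
  have hi := inner_displacement i
  have hj := inner_displacement j
  simp only [inner_sub_left, inner_sub_right, inner_add_left, real_inner_smul_left]
    at hvij hi hj ⊢
  linear_combination (hi - hj) / 2 + a * hvij

lemma norm_sq_eq_two_mul_inner_of_forall_exists_norm_sub_eq (b : AffineBasis ι ℝ V)
    {p : ι → V} {v w : V} (hv : ∀ i j, ⟪v, b i - b j⟫ = ⟪w, p i - p j⟫)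
    (h : ∀ a : ℝ, ∃ x, ∀ i, ‖p i + a • w - b i‖ = ‖x - b i‖) :
    ‖v‖ ^ 2 = 2 * ⟪v, w⟫ := by
  choose x hx using h
  have x_affine (a : ℝ) : x a = x 0 + a • (w - v) :=
    eq_add_smul_of_forall_norm_sub_eq b hv (by simpa using hx 0) (hx a)
  obtain ⟨i⟩ := b.nonempty
  have norm_direction : ‖w‖ = ‖w - v‖ := by
    refine norm_eq_norm_of_forall_norm_add_smul_eq (x := p i - b i) (y := x 0 - b i) fun a => ?_
    rw [sub_add_eq_add_sub, hx a i, x_affine a, sub_add_eq_add_sub]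
  have norm_sub_sq := norm_sub_sq_real w v
  rw [← norm_direction, real_inner_comm] at norm_sub_sq
  linarith

-- `x` is pulled back by the rigid motion `y ↦ R k y + t`, hence compared with `b i` itself.
theorem eq_of_forall_exists_norm_sub_eq [Finite ι] {κ : Type*} [Fintype κ] [Nonempty κ]
    {R : κ → V ≃ₗᵢ[ℝ] V} (hR : ∀ y, ∑ k, R k y = 0) (b : AffineBasis ι ℝ V) {s : ι → V}
    (h : ∀ k t, ∃ x, ∀ i, ‖s i - (R k (b i) + t)‖ = ‖x - b i‖) (i j : ι) : s i = s j := by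
  set w := s i - s j with hw
  obtain ⟨v, hv⟩ := exists_forall_inner_sub_eq_sub b fun i => ⟪w, s i⟫
  have norm_sq_eq (k : κ) : ‖v‖ ^ 2 = 2 * ⟪R k v, w⟫ := by
    rw [(R k).inner_map_eq_flip]
    refine norm_sq_eq_two_mul_inner_of_forall_exists_norm_sub_eq b
      (p := fun i => (R k).symm (s i)) (fun i j => ?_) fun a => ?_
    · rw [hv, ← map_sub, LinearIsometryEquiv.inner_map_map, inner_sub_right]
    · obtain ⟨x, hx⟩ := h k (-(a • w))
      refine ⟨x, fun i => ?_⟩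
      rw [← hx, ← (R k).norm_map]
      congr 1
      simp only [map_sub, map_add, map_smul, LinearIsometryEquiv.apply_symm_apply]
      abel
  have v_eq_zero : v = 0 := by
    have hsum : ∑ _k : κ, ‖v‖ ^ 2 = 0 := by
      rw [Finset.sum_congr rfl fun k _ => norm_sq_eq k, ← Finset.mul_sum, ← sum_inner, hR,
        inner_zero_left, mul_zero]
    simpa using hsum
  rw [← sub_eq_zero, ← inner_self_eq_zero (𝕜 := ℝ), ← hw]
  nth_rewrite 2 [hw]
  rw [inner_sub_right, ← hv, v_eq_zero, inner_zero_left]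

end InnerProductSpace

lemma exists_bordered_kernel_of_fM_eq_zero {m : Fin 4 → E3} {u : Fin 4 → ℝ} (h : fM m u = 0) :
    ∃ (p : ℝ) (q : Fin 4 → ℝ) (r : ℝ), ¬(p = 0 ∧ q = 0 ∧ r = 0) ∧
      ∑ j, q j * u j + r = 0 ∧
      (∀ i, p * u i + ∑ j, q j * ‖m i - m j‖ ^ 2 + r = 0) ∧ p + ∑ j, q j = 0 := by
  obtain ⟨k, hk, hker⟩ := Matrix.exists_mulVec_eq_zero_iff.mpr h
  have row (i : Fin 6) := congrFun hker i
  simp only [Matrix.mulVec, dotProduct, Fin.sum_univ_six] at row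
  refine ⟨k 0, ![k 1, k 2, k 3, k 4], k 5, ?_, ?_, fun i => ?_, ?_⟩
  · rintro ⟨hp, hq, hr⟩
    refine hk (funext fun i => ?_)
    fin_cases i
    exacts [hp, congrFun hq 0, congrFun hq 1, congrFun hq 2, congrFun hq 3, hr]
  · simpa [Fin.sum_univ_four, mul_comm] using row 0
  · fin_cases i
    · simpa [Fin.sum_univ_four, mul_comm, add_assoc] using row 1
    · simpa [Fin.sum_univ_four, mul_comm, add_assoc] using row 2
    · simpa [Fin.sum_univ_four, mul_comm, add_assoc] using row 3
    · simpa [Fin.sum_univ_four, mul_comm, add_assoc] using row 4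
  · simpa [Fin.sum_univ_four, add_assoc] using row 5

lemma exists_norm_sub_sq_eq_of_fM_eq_zero {m : Fin 4 → E3} (hm : AffineIndependent ℝ m)
    {u : Fin 4 → ℝ} (h : fM m u = 0) : ∃ x : E3, ∀ i, ‖x - m i‖ ^ 2 = u i := by
  obtain ⟨p, q, r, hne, hfirst, hmid, hlast⟩ := exists_bordered_kernel_of_fM_eq_zero h
  exact exists_norm_sub_sq_eq_of_bordered_kernel hm hne hfirst hmid hlast

lemma fM_rigidMotion (R : E3 →ₗᵢ[ℝ] E3) (t : E3) (m : Fin 4 → E3) (u : Fin 4 → ℝ) :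
    fM (fun i => R (m i) + t) u = fM m u := by
  simp only [fM, add_sub_add_right_eq_sub, ← map_sub, LinearIsometry.norm_map]

section UnitaryIsometry

variable {n 𝕜 : Type*} [Fintype n] [DecidableEq n] [RCLike 𝕜]

/-- The linear isometry of Euclidean space given by a unitary matrix. -/
def unitaryIsometry (A : Matrix.unitaryGroup n 𝕜) :
    EuclideanSpace 𝕜 n ≃ₗᵢ[𝕜] EuclideanSpace 𝕜 n :=
  Unitary.linearIsometryEquiv ⟨Matrix.toEuclideanCLM (n := n) (𝕜 := 𝕜) A, Unitary.map_mem _ A.2⟩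

lemma unitaryIsometry_apply (A : Matrix.unitaryGroup n 𝕜) (x : EuclideanSpace 𝕜 n) :
    unitaryIsometry A x = Matrix.toEuclideanLin (A : Matrix n n 𝕜) x :=
  rfl

end UnitaryIsometry

/-- The Klein four-group of rotations of `ℝ³` with diagonal matrices: the identity (index `0`) and
the half-turns about the three coordinate axes. -/
def kleinRotation (k : Fin 4) : Matrix (Fin 3) (Fin 3) ℝ :=
  Matrix.diagonal (![![1, 1, 1], ![1, -1, -1], ![-1, 1, -1], ![-1, -1, 1]] k)

lemma kleinRotation_mul_transpose (k : Fin 4) :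
    kleinRotation k * (kleinRotation k).transpose = 1 := by
  rw [kleinRotation, Matrix.diagonal_transpose, Matrix.diagonal_mul_diagonal,
    Matrix.diagonal_eq_one]
  funext i
  fin_cases k <;> fin_cases i <;> simp

lemma det_kleinRotation (k : Fin 4) : (kleinRotation k).det = 1 := by
  rw [kleinRotation, Matrix.det_diagonal, Fin.prod_univ_three]
  fin_cases k <;> simp

lemma sum_kleinRotation : ∑ k, kleinRotation k = 0 := by
  simp_rw [kleinRotation, ← Matrix.diagonalAddMonoidHom_apply, ← map_sum]
  rw [Matrix.diagonalAddMonoidHom_apply, Matrix.diagonal_eq_zero]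
  funext i
  fin_cases i <;> simp [Fin.sum_univ_four]

lemma kleinRotation_mem_unitaryGroup (k : Fin 4) :
    kleinRotation k ∈ Matrix.unitaryGroup (Fin 3) ℝ := by
  rw [Matrix.mem_unitaryGroup_iff, Matrix.star_eq_conjTranspose,
    Matrix.conjTranspose_eq_transpose_of_trivial, kleinRotation_mul_transpose]

/-- Claim 2: for any four points `s₁,…,s₄` not all equal and any non-coplanar initial
microphone positions, there is a placement (rotation `R ∈ SO(3)` and translation `t`) of
the microphones such that the echo sorting criterion does not vanish. -/
theorem exists_good_placement_fixed_source (s : Fin 4 → E3) (hs : ¬ ∀ i j, s i = s j)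
    (mini : Fin 4 → E3) (hm : AffineIndependent ℝ mini) :
    ∃ (R : Matrix (Fin 3) (Fin 3) ℝ) (t : E3),
      R * R.transpose = 1 ∧ R.det = 1 ∧
      fM (fun i => Matrix.toEuclideanLin R (mini i) + t)
        (fun i => ‖s i - (Matrix.toEuclideanLin R (mini i) + t)‖ ^ 2) ≠ 0 := by
  by_contra! hvanish
  let R (k : Fin 4) := unitaryIsometry ⟨_, kleinRotation_mem_unitaryGroup k⟩
  have sum_R (y : E3) : ∑ k, R k y = 0 := by
    simp_rw [R, unitaryIsometry_apply, ← LinearMap.sum_apply, ← map_sum, sum_kleinRotation,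
      map_zero, LinearMap.zero_apply]
  let b : AffineBasis (Fin 4) ℝ E3 :=
    ⟨mini, hm, hm.affineSpan_eq_top_iff_card_eq_finrank_add_one.mpr (by simp)⟩
  refine hs (eq_of_forall_exists_norm_sub_eq sum_R b fun k t => ?_)
  have hfM := hvanish (kleinRotation k) t (kleinRotation_mul_transpose k) (det_kleinRotation k)
  obtain ⟨x, hx⟩ := exists_norm_sub_sq_eq_of_fM_eq_zero hm
    ((fM_rigidMotion (R k).toLinearIsometry t mini _).symm.trans hfM)
  exact ⟨x, fun i => ((sq_eq_sq₀ (norm_nonneg _) (norm_nonneg _)).mp (hx i)).symm⟩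

end
end

section
/- Let 𝒲 be a finite set of affine planes in ℝ³ (the walls), let L ∈ ℝ³ with L ∉ W for every W ∈ 𝒲, and for W ∈ 𝒲 let s_W := ref_W(L) be the reflection of L across W. Let m₁^ini,…,m₄^ini ∈ ℝ³ be non-coplanar points. Then the set of pairs (t, R) ∈ ℝ³ × SO(3) for which there exist walls W₁, W₂, W₃, W₄ ∈ 𝒲, not all equal, with f_M(‖s_{W₁} − m₁‖², ‖s_{W₂} − m₂‖², ‖s_{W₃} − m₃‖², ‖s_{W₄} − m₄‖²) = 0 (where m_i := R m_i^ini + t) has measure zero with respect to the product of the Lebesgue measure on ℝ³ and the Haar probability measure on SO(3). -/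
open MeasureTheory
open scoped RealInnerProductSpace

noncomputable section

open scoped Classical in
/-- The reflection (mirror image) of a point across an affine subspace of ℝ³,
as a total function. -/
def reflAff (W : AffineSubspace ℝ E3) (L : E3) : E3 :=
  if h : Nonempty W then
    haveI := h
    EuclideanGeometry.reflection W L
  else L

/-- `W` is an affine plane in ℝ³. -/
def IsPlane (W : AffineSubspace ℝ E3) : Prop :=
  (W : Set E3).Nonempty ∧ Module.finrank ℝ W.direction = 2

instance : MeasurableSpace (Matrix (Fin 3) (Fin 3) ℝ) :=
  inferInstanceAs (MeasurableSpace (Fin 3 → Fin 3 → ℝ))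

/-!
Every `u : Fin 4 → ℝ` has the form `u i = ‖p - m i‖² + k` for an affine basis `m` of `ℝ³`, and
`f_M(u) ≠ 0` as soon as the defect `k` is nonzero. Let `φ` be the affine map with `φ (aᵢ) = sᵢ`,
where `aᵢ` are the initial microphone positions and `sᵢ` the mirror images of the loudspeaker,
and let `A` be the adjoint of its linear part. For microphones at `R aᵢ + t`, the defect is a
quadratic polynomial in `t` with leading part `2 ⟪R A t, t⟫ - ‖A t‖²`. A plane avoiding `L` is
the perpendicular bisector of `L` and its mirror image, so distinct walls give distinct images;
hence `φ` is not constant and `A e ≠ 0` for some `e`. By rotation invariance,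
`2 ⟪R A e, e⟫ ≠ ‖A e‖²` for almost every `R`, and then the defect vanishes only for `t` in a null
set. Both null-set claims come from Fubini's theorem along a one-parameter family of
measure-preserving maps on which the exceptional condition is a nontrivial equation of degree at
most two in the parameter.
-/

theorem finite_setOf_quadratic_eq_zero {a b c : ℝ} (h : a ≠ 0 ∨ b ≠ 0 ∨ c ≠ 0) :
    {x : ℝ | a * x ^ 2 + b * x + c = 0}.Finite := by
  have hpoly : (⟨0, a, b, c⟩ : Cubic ℝ).toPoly ≠ 0 := by
    rcases h with ha | hb | hc
    · exact Cubic.ne_zero_of_b_ne_zero ha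
    · exact Cubic.ne_zero_of_c_ne_zero hb
    · exact Cubic.ne_zero_of_d_ne_zero hc
  refine (Polynomial.finite_setOfPred_isRoot hpoly).subset fun x hx ↦ ?_
  simpa [Cubic.toPoly, Polynomial.IsRoot] using hx

theorem measure_eq_zero_of_forall_measure_orbit_eq_zero {Θ X : Type*} [MeasurableSpace Θ]
    [MeasurableSpace X] {ν : Measure Θ} [SFinite ν] [NeZero ν] {μ : Measure X} [SFinite μ]
    {g : Θ → X → X} (hg : Measurable (Function.uncurry g)) (hinv : ∀ θ, μ.map (g θ) = μ)
    {Z : Set X} (hZ : MeasurableSet Z) (hnull : ∀ x, ν {θ | g θ x ∈ Z} = 0) : μ Z = 0 := by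
  have h_ae : ∀ᵐ θ ∂ν, ∀ᵐ x ∂μ, g θ x ∉ Z :=
    (Measure.ae_ae_comm (hg hZ).compl).2 <|
      .of_forall fun x ↦ measure_eq_zero_iff_ae_notMem.1 (hnull x)
  obtain ⟨θ, hθ⟩ := h_ae.exists
  calc μ Z = μ.map (g θ) Z := by rw [hinv θ]
    _ = μ (g θ ⁻¹' Z) := Measure.map_apply hg.of_uncurry_left hZ
    _ = 0 := measure_eq_zero_iff_ae_notMem.2 hθ

theorem measure_setOf_quadratic_eq_zero {E : Type*} [NormedAddCommGroup E]
    [NormedSpace ℝ E] [SecondCountableTopology E] [MeasurableSpace E] [BorelSpace E]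
    (μ : Measure E) [SFinite μ] [μ.IsAddLeftInvariant] (B : E →L[ℝ] E →L[ℝ] ℝ) (l : E →L[ℝ] ℝ)
    (c : ℝ) {e : E} (he : B e e ≠ 0) :
    μ {t | B t t + l t + c = 0} = 0 := by
  refine measure_eq_zero_of_forall_measure_orbit_eq_zero (ν := (volume : Measure ℝ))
    (g := fun x t ↦ x • e + t) (by fun_prop) (fun x ↦ map_add_left_eq_self μ _)
    (measurableSet_eq_fun (by fun_prop) measurable_const) fun t ↦ ?_
  refine ((finite_setOf_quadratic_eq_zero (b := B e t + B t e + l e)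
    (c := B t t + l t + c) (.inl he)).subset fun x hx ↦ ?_).measure_zero volume
  simp only [Set.mem_ofPred_eq, map_add, map_smul, add_apply, smul_eq_mul,
    smul_apply] at hx ⊢
  linear_combination hx

section Rotation

variable {E : Type*} [NormedAddCommGroup E] [InnerProductSpace ℝ E]

theorem det_reflection_span_singleton_trans [FiniteDimensional ℝ E] {u w : E} (hu : u ≠ 0)
    (hw : w ≠ 0) :
    LinearMap.det ((ℝ ∙ w).reflection.trans (ℝ ∙ u).reflection : E ≃ₗᵢ[ℝ] E).toLinearMap = 1 := by
  have hrank : Module.finrank ℝ (ℝ ∙ u)ᗮ = Module.finrank ℝ (ℝ ∙ w)ᗮ := by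
    have h₁ := (ℝ ∙ u).finrank_add_finrank_orthogonal
    have h₂ := (ℝ ∙ w).finrank_add_finrank_orthogonal
    rw [finrank_span_singleton hu] at h₁
    rw [finrank_span_singleton hw] at h₂
    lia
  change LinearMap.det ((ℝ ∙ u).reflection.toLinearMap ∘ₗ (ℝ ∙ w).reflection.toLinearMap) = 1
  rw [LinearMap.det_comp, Submodule.det_reflection, Submodule.det_reflection, hrank,
    ← mul_pow, neg_one_mul, neg_neg, one_pow]

theorem inner_reflection_reflection_of_inner_eq_zero {e f : E} (hef : ⟪e, f⟫ = 0) (q : ℝ)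
    (v : E) :
    ⟪e, (ℝ ∙ f).reflection ((ℝ ∙ (e + q • f)).reflection v)⟫ =
      ⟪e, v⟫ - 2 * ‖e‖ ^ 2 * (⟪e, v⟫ + q * ⟪f, v⟫) / (‖e‖ ^ 2 + q ^ 2 * ‖f‖ ^ 2) := by
  have hnorm : ‖e + q • f‖ ^ 2 = ‖e‖ ^ 2 + q ^ 2 * ‖f‖ ^ 2 := by
    rw [norm_add_sq_real, inner_smul_right, hef, norm_smul, mul_pow, Real.norm_eq_abs, sq_abs]
    ring
  simp only [Submodule.reflection_singleton_apply, hnorm, RCLike.ofReal_real_eq_id, id,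
    inner_sub_right, inner_smul_right, inner_add_right, inner_add_left, inner_smul_left,
    hef, two_smul, real_inner_self_eq_norm_sq, RCLike.conj_to_real]
  ring

theorem exists_ne_zero_inner_eq_zero [FiniteDimensional ℝ E] (hE : 1 < Module.finrank ℝ E)
    (e : E) : ∃ f : E, f ≠ 0 ∧ ⟪e, f⟫ = 0 := by
  have hker : (innerₗ E e).ker ≠ ⊥ := LinearMap.ker_ne_bot_of_finrank_lt (by simpa using hE)
  obtain ⟨f, hf, hf₀⟩ := Submodule.exists_mem_ne_zero_of_ne_bot hker
  exact ⟨f, hf₀, hf⟩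

theorem measure_setOf_inner_eq_const_eq_zero_of_rotation_invariant [FiniteDimensional ℝ E]
    [MeasurableSpace E] [BorelSpace E] (hE : 1 < Module.finrank ℝ E) (ν : Measure E) [SFinite ν]
    (hν : ∀ g : E ≃ₗᵢ[ℝ] E, LinearMap.det g.toLinearMap = 1 → ν.map g = ν)
    (e : E) {c : ℝ} (hc : c ≠ 0) : ν {v | ⟪e, v⟫ = c} = 0 := by
  rcases eq_or_ne e 0 with rfl | he
  · simp [hc.symm]
  obtain ⟨f, hf, hef⟩ : ∃ f : E, f ≠ 0 ∧ ⟪e, f⟫ = 0 :=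
    exists_ne_zero_inner_eq_zero hE e
  have hw : ∀ q : ℝ, e + q • f ≠ 0 := fun q h ↦ he <| by
    have := congrArg (fun x ↦ ⟪e, x⟫) h
    simpa [inner_add_right, inner_smul_right, hef] using this
  -- Unlike an angle, the parameter `q` of these rotations enters the condition polynomially.
  refine measure_eq_zero_of_forall_measure_orbit_eq_zero (ν := (volume : Measure ℝ))
    (g := fun q ↦ (ℝ ∙ (e + q • f)).reflection.trans (ℝ ∙ f).reflection) ?_
    (fun q ↦ hν _ (det_reflection_span_singleton_trans hf (hw q)))
    (measurableSet_eq_fun (by fun_prop) measurable_const) fun v ↦ ?_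
  · simp only [LinearIsometryEquiv.coe_trans, Function.uncurry_def, Function.comp_apply,
      Submodule.reflection_singleton_apply, Real.ringHom_apply, smul_add]
    fun_prop
  · have hcoeff : ‖f‖ ^ 2 * (⟪e, v⟫ - c) ≠ 0 ∨ -2 * ‖e‖ ^ 2 * ⟪f, v⟫ ≠ 0 ∨
        - ‖e‖ ^ 2 * (⟪e, v⟫ + c) ≠ 0 := by
      by_contra! h
      have h₁ : ⟪e, v⟫ - c = 0 := by simpa [hf] using h.1
      have h₂ : ⟪e, v⟫ + c = 0 := by simpa [he] using h.2.2
      exact hc (by linarith)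
    refine ((finite_setOf_quadratic_eq_zero hcoeff).subset fun q hq ↦ ?_).measure_zero volume
    have hpos : ‖e‖ ^ 2 + q ^ 2 * ‖f‖ ^ 2 ≠ 0 := by positivity
    simp only [LinearIsometryEquiv.trans_apply, Set.mem_ofPred_eq,
      inner_reflection_reflection_of_inner_eq_zero hef, neg_mul] at hq ⊢
    field_simp at hq
    linear_combination hq

end Rotation

theorem exists_linearIsometryEquiv_eq_toEuclideanLin {ι : Type*} [Fintype ι] [DecidableEq ι]
    {A : Matrix ι ι ℝ} (hA : A ∈ Matrix.orthogonalGroup ι ℝ) :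
    ∃ T : EuclideanSpace ℝ ι ≃ₗᵢ[ℝ] EuclideanSpace ℝ ι,
      T.toLinearMap = Matrix.toEuclideanLin A :=
  ⟨Unitary.linearIsometryEquiv
    ⟨_, Unitary.map_mem (Matrix.toEuclideanCLM (n := ι) (𝕜 := ℝ)) hA⟩, rfl⟩

theorem exists_mem_specialOrthogonalGroup_toEuclideanLin_eq {ι : Type*} [Fintype ι]
    [DecidableEq ι] {g : EuclideanSpace ℝ ι ≃ₗᵢ[ℝ] EuclideanSpace ℝ ι}
    (hg : LinearMap.det g.toLinearMap = 1) :
    ∃ A ∈ Matrix.specialOrthogonalGroup ι ℝ, Matrix.toEuclideanLin A = g.toLinearMap := by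
  let u := Unitary.linearIsometryEquiv.symm g
  let A := (Matrix.toEuclideanCLM (n := ι) (𝕜 := ℝ)).symm u
  have hA : Matrix.toEuclideanLin A = g.toLinearMap := by
    rw [← Matrix.coe_toEuclideanCLM_eq_toEuclideanLin, StarAlgEquiv.apply_symm_apply]
    rfl
  refine ⟨A, ?_, hA⟩
  refine Matrix.mem_specialOrthogonalGroup_iff.2 ⟨?_, ?_⟩
  · exact Unitary.map_mem (Matrix.toEuclideanCLM (n := ι) (𝕜 := ℝ)).symm u.2
  · rw [← hg, ← hA, LinearMap.det_toLpLin]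

section AffineBasis

variable {ι E : Type*} [NormedAddCommGroup E] [InnerProductSpace ℝ E]

theorem eq_zero_of_forall_inner_affineBasis_eq (b : AffineBasis ι ℝ E) {d : E} {c : ℝ}
    (h : ∀ i, ⟪b i, d⟫ = c) : d = 0 := by
  obtain ⟨i₀⟩ := b.nonempty
  refine InnerProductSpace.ext_inner_left_basis (𝕜 := ℝ) (b.basisOf i₀) fun i ↦ ?_
  rw [b.basisOf_apply, vsub_eq_sub, inner_sub_left, h, h, sub_self, inner_zero_right]

theorem exists_affineMap_apply_eq {k V P W : Type*} [CommRing k] [AddCommGroup V] [Module k V]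
    [AddTorsor V P] [AddCommGroup W] [Module k W] [Finite ι] (b : AffineBasis ι k P) (f : ι → W) :
    ∃ φ : P →ᵃ[k] W, ∀ i, φ (b i) = f i := by
  classical
  have := Fintype.ofFinite ι
  refine ⟨(Fintype.linearCombination k f).toAffineMap.comp b.coords, fun i ↦ ?_⟩
  simp [Fintype.linearCombination_apply, AffineBasis.coord_apply]

theorem exists_eq_norm_sub_sq_add_const [Finite ι] (b : AffineBasis ι ℝ E) (u : ι → ℝ) :
    ∃ (p : E) (k : ℝ), ∀ i, u i = ‖p - b i‖ ^ 2 + k := by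
  have := b.finiteDimensional
  obtain ⟨φ, hφ⟩ := exists_affineMap_apply_eq b fun i ↦ u i - ‖b i‖ ^ 2
  let y := (InnerProductSpace.toDual ℝ E).symm φ.linear.toContinuousLinearMap
  have hy (x : E) : φ x = ⟪y, x⟫ + φ 0 := by
    simpa [y] using congrFun φ.decomp x
  refine ⟨-(1 / 2 : ℝ) • y, φ 0 - ‖-(1 / 2 : ℝ) • y‖ ^ 2, fun i ↦ ?_⟩
  rw [norm_sub_sq_real, inner_smul_left, RCLike.conj_to_real]
  linear_combination -hφ i + hy (b i)

variable [Fintype ι]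

theorem exists_affineBasis_coe_eq {k V P : Type*} [DivisionRing k] [AddCommGroup V] [Module k V]
    [AddTorsor V P] [FiniteDimensional k V] {a : ι → P} (ha : AffineIndependent k a)
    (hcard : Fintype.card ι = Module.finrank k V + 1) : ∃ b : AffineBasis ι k P, ⇑b = a :=
  ⟨⟨a, ha, ha.affineSpan_eq_top_iff_card_eq_finrank_add_one.2 hcard⟩, rfl⟩

theorem sum_mul_norm_sub_sq_sub_sum_mul_norm_sub_sq {q : ι → E} {w : ι → ℝ}
    (hw : ∑ i, w i = 0) (x y : E) :
    ∑ i, w i * ‖x - q i‖ ^ 2 - ∑ i, w i * ‖y - q i‖ ^ 2 = -2 * ⟪x - y, ∑ i, w i • q i⟫ := by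
  have hterm (i : ι) : w i * ‖x - q i‖ ^ 2 - w i * ‖y - q i‖ ^ 2 =
      w i * (‖x‖ ^ 2 - ‖y‖ ^ 2) + -2 * ⟪x - y, w i • q i⟫ := by
    rw [norm_sub_sq_real, norm_sub_sq_real, inner_smul_right, inner_sub_left]
    ring
  rw [← Finset.sum_sub_distrib, Finset.sum_congr rfl fun i _ ↦ hterm i, Finset.sum_add_distrib,
    ← Finset.sum_mul, hw, ← Finset.mul_sum, inner_sum, zero_mul, zero_add]

theorem eq_zero_of_cayleyMenger_relations (m : AffineBasis ι ℝ E) {p : E} {k : ℝ}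
    (hk : k ≠ 0) {α β : ℝ} {c : ι → ℝ}
    (h_source : ∑ j, c j * (‖p - m j‖ ^ 2 + k) + β = 0)
    (h_mic : ∀ i, α * (‖p - m i‖ ^ 2 + k) + ∑ j, c j * ‖m i - m j‖ ^ 2 + β = 0)
    (h_sum : α + ∑ j, c j = 0) : α = 0 ∧ c = 0 ∧ β = 0 := by
  let w : Option ι → ℝ := fun o ↦ o.elim α c
  let q : Option ι → E := fun o ↦ o.elim p m
  set d := α • p + ∑ j, c j • m j with hd
  have h_inner (i : ι) : ⟪m i, d⟫ = ⟪p, d⟫ + α * k := by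
    have h := sum_mul_norm_sub_sq_sub_sum_mul_norm_sub_sq (q := q) (w := w)
      (by simpa [w, Fintype.sum_option] using h_sum) p (m i)
    simp only [mul_add, Finset.sum_add_distrib, ← Finset.sum_mul] at h_source
    simp only [Fintype.sum_option, w, q, Option.elim, sub_self, norm_zero, ← hd, inner_sub_left,
      norm_sub_rev (m i) p] at h
    linear_combination (-h + h_source - h_mic i - k * h_sum) / 2
  have hd₀ : d = 0 := eq_zero_of_forall_inner_affineBasis_eq m h_inner
  have hα : α = 0 := by
    obtain ⟨i⟩ := m.nonempty
    simpa [hd₀, hk] using h_inner i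
  have hc : c = 0 := by
    have h_comb : ∑ i, c i • m i = 0 := by
      simpa [hd, hα] using hd₀
    exact funext fun i ↦ affineIndependent_iff.1 m.ind Finset.univ c (by simpa [hα] using h_sum)
      h_comb i (Finset.mem_univ i)
  exact ⟨hα, hc, by simpa [hc] using h_source⟩

end AffineBasis

theorem exists_ne_zero_of_fM_eq_zero {m : Fin 4 → E3} {u : Fin 4 → ℝ} (h : fM m u = 0) :
    ∃ (α β : ℝ) (c : Fin 4 → ℝ), ¬(α = 0 ∧ c = 0 ∧ β = 0) ∧ ∑ j, c j * u j + β = 0 ∧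
      (∀ i, α * u i + ∑ j, c j * ‖m i - m j‖ ^ 2 + β = 0) ∧ α + ∑ j, c j = 0 := by
  obtain ⟨v, hv, hMv⟩ := Matrix.exists_mulVec_eq_zero_iff.2 h
  have h_row (i : Fin 6) := congrFun hMv i
  simp only [Matrix.mulVec, dotProduct, Fin.sum_univ_six] at h_row
  refine ⟨v 0, v 5, ![v 1, v 2, v 3, v 4], ?_, ?_, fun i ↦ ?_, ?_⟩
  · rintro ⟨hα, hc, hβ⟩
    have hc' (j : Fin 4) := congrFun hc j
    refine hv (funext fun i ↦ ?_)
    fin_cases i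
    exacts [hα, hc' 0, hc' 1, hc' 2, hc' 3, hβ]
  · simpa [Fin.sum_univ_four, mul_comm] using h_row 0
  · have h_mic := h_row i.succ.castSucc
    fin_cases i <;> simpa [Fin.sum_univ_four, mul_comm, add_assoc] using h_mic
  · simpa [Fin.sum_univ_four, add_assoc] using h_row 5

theorem fM_norm_sub_sq_add_const_ne_zero {m : Fin 4 → E3} (hm : AffineIndependent ℝ m) (p : E3)
    {k : ℝ} (hk : k ≠ 0) : fM m (fun i ↦ ‖p - m i‖ ^ 2 + k) ≠ 0 := by
  intro h
  obtain ⟨b, rfl⟩ := exists_affineBasis_coe_eq hm (by simp)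
  obtain ⟨α, β, c, h_ne, h_source, h_mic, h_sum⟩ := exists_ne_zero_of_fM_eq_zero h
  exact h_ne (eq_zero_of_cayleyMenger_relations b hk h_source h_mic h_sum)

theorem norm_affineMap_sub_translate_sq {E F : Type*} [NormedAddCommGroup E]
    [InnerProductSpace ℝ E] [FiniteDimensional ℝ E] [NormedAddCommGroup F] [InnerProductSpace ℝ F]
    [FiniteDimensional ℝ F] (T : E →ₗᵢ[ℝ] F) (φ : E →ᵃ[ℝ] F) {x p : E} {k : ℝ}
    (h : ‖φ x - T x‖ ^ 2 = ‖p - x‖ ^ 2 + k) (t : F) :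
    ‖φ x - (T x + t)‖ ^ 2 = ‖T (p + φ.linear.adjoint t) - (T x + t)‖ ^ 2 +
      (2 * ⟪T (φ.linear.adjoint t), t⟫ - ‖φ.linear.adjoint t‖ ^ 2 + 2 * ⟪T p - φ p, t⟫ + k) := by
  set b := φ.linear.adjoint t with hb
  have h_adj : ⟪φ x, t⟫ - ⟪φ p, t⟫ = ⟪x, b⟫ - ⟪p, b⟫ := by
    rw [← inner_sub_left, ← inner_sub_left, ← vsub_eq_sub, ← φ.linearMap_vsub, vsub_eq_sub, hb,
      LinearMap.adjoint_inner_right]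
  have h_source : ‖φ x - (T x + t)‖ ^ 2 = ‖φ x - T x‖ ^ 2 - 2 * ⟪φ x - T x, t⟫ + ‖t‖ ^ 2 := by
    rw [← sub_sub, norm_sub_sq_real]
  have h_image : ‖T (p + b) - (T x + t)‖ ^ 2 =
      ‖p - x‖ ^ 2 + 2 * ⟪p - x, b⟫ + ‖b‖ ^ 2 - 2 * ⟪T (p - x) + T b, t⟫ + ‖t‖ ^ 2 := by
    rw [← sub_sub, ← map_sub, norm_sub_sq_real, T.norm_map, ← map_add, add_sub_right_comm,
      norm_add_sq_real]
  rw [h_source, h_image, h]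
  simp only [map_sub, inner_add_left, inner_sub_left]
  linear_combination -2 * h_adj

theorem volume_setOf_fM_translate_eq_zero {a : Fin 4 → E3} (ha : AffineIndependent ℝ a)
    (T : E3 →ₗᵢ[ℝ] E3) (φ : E3 →ᵃ[ℝ] E3) {e : E3}
    (he : 2 * ⟪T (φ.linear.adjoint e), e⟫ ≠ ‖φ.linear.adjoint e‖ ^ 2) :
    volume {t | fM (fun i ↦ T (a i) + t) (fun i ↦ ‖φ (a i) - (T (a i) + t)‖ ^ 2) = 0} = 0 := by
  obtain ⟨a, rfl⟩ := exists_affineBasis_coe_eq ha (by simp)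
  obtain ⟨p, k, hpk⟩ := exists_eq_norm_sub_sq_add_const a fun i ↦ ‖φ (a i) - T (a i)‖ ^ 2
  let A : E3 →L[ℝ] E3 := φ.linear.adjoint.toContinuousLinearMap
  let B : E3 →L[ℝ] E3 →L[ℝ] ℝ :=
    (2 : ℝ) • (innerSL ℝ).comp (T.toContinuousLinearMap.comp A) - (innerSL ℝ).bilinearComp A A
  let l : E3 →L[ℝ] ℝ := (2 : ℝ) • innerSL ℝ (T p - φ p)
  have hB (t : E3) : B t t = 2 * ⟪T (φ.linear.adjoint t), t⟫ - ‖φ.linear.adjoint t‖ ^ 2 := by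
    simp [B, A]
  refine measure_mono_null (fun t ht ↦ ?_)
    (measure_setOf_quadratic_eq_zero volume B l k (e := e) (by rwa [hB, sub_ne_zero]))
  by_contra h_defect
  have h_indep : AffineIndependent ℝ fun i ↦ T (a i) + t :=
    ha.map' (T.toLinearMap.toAffineMap + AffineMap.const ℝ E3 t)
      ((add_left_injective t).comp T.injective)
  refine fM_norm_sub_sq_add_const_ne_zero h_indep (T (p + φ.linear.adjoint t)) h_defect ?_
  have h_dist (i : Fin 4) : ‖φ (a i) - (T (a i) + t)‖ ^ 2 =
      ‖T (p + φ.linear.adjoint t) - (T (a i) + t)‖ ^ 2 + (B t t + l t + k) := by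
    rw [norm_affineMap_sub_translate_sq T φ (hpk i) t, hB]
    simp [l, inner_sub_left]
  simpa only [Set.mem_ofPred_eq, h_dist] using ht

instance : BorelSpace (Matrix (Fin 3) (Fin 3) ℝ) :=
  inferInstanceAs (BorelSpace (Fin 3 → Fin 3 → ℝ))

instance : SecondCountableTopology (Matrix (Fin 3) (Fin 3) ℝ) :=
  inferInstanceAs (SecondCountableTopology (Fin 3 → Fin 3 → ℝ))

theorem continuous_toEuclideanLin_apply {ι : Type*} [Fintype ι] [DecidableEq ι]
    (b : EuclideanSpace ℝ ι) :
    Continuous fun R : Matrix ι ι ℝ ↦ Matrix.toEuclideanLin R b :=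
  (PiLp.continuous_toLp 2 _).comp (continuous_id.matrix_mulVec continuous_const)

theorem isClosed_specialOrthogonalGroup (ι : Type*) [Fintype ι] [DecidableEq ι] :
    IsClosed (Matrix.specialOrthogonalGroup ι ℝ : Set (Matrix ι ι ℝ)) :=
  isClosed_unitary.inter (isClosed_singleton.preimage continuous_id.matrix_det)

theorem measure_setOf_inner_toEuclideanLin_eq_const_eq_zero
    {μ : Measure (Matrix (Fin 3) (Fin 3) ℝ)} [SFinite μ]
    (hinv : ∀ g ∈ Matrix.specialOrthogonalGroup (Fin 3) ℝ, μ.map (fun R ↦ g * R) = μ)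
    (e b : E3) {c : ℝ} (hc : c ≠ 0) :
    μ {R | ⟪e, Matrix.toEuclideanLin R b⟫ = c} = 0 := by
  have h_eval : Measurable fun R : Matrix (Fin 3) (Fin 3) ℝ ↦ Matrix.toEuclideanLin R b :=
    (continuous_toEuclideanLin_apply b).measurable
  have h_rot (g : E3 ≃ₗᵢ[ℝ] E3) (hg : LinearMap.det g.toLinearMap = 1) :
      (μ.map fun R ↦ Matrix.toEuclideanLin R b).map g =
        μ.map fun R ↦ Matrix.toEuclideanLin R b := by
    obtain ⟨A, hA, hAg⟩ := exists_mem_specialOrthogonalGroup_toEuclideanLin_eq hg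
    have h_mul : Measurable fun R : Matrix (Fin 3) (Fin 3) ℝ ↦ A * R :=
      (continuous_const.mul continuous_id).measurable
    conv_rhs => rw [← hinv A hA, Measure.map_map h_eval h_mul]
    rw [Measure.map_map g.continuous.measurable h_eval]
    congr 1 with R : 1
    have := congrArg (· (Matrix.toEuclideanLin R b)) hAg
    simpa using this.symm
  rw [← measure_setOf_inner_eq_const_eq_zero_of_rotation_invariant (by simp)
    (μ.map fun R ↦ Matrix.toEuclideanLin R b) h_rot e hc,
    Measure.map_apply h_eval (measurableSet_eq_fun (by fun_prop) measurable_const)]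
  rfl

theorem continuous_fM_comp {X : Type*} [TopologicalSpace X] {m : X → Fin 4 → E3}
    {u : X → Fin 4 → ℝ} (hm : ∀ i, Continuous fun x ↦ m x i) (hu : ∀ i, Continuous fun x ↦ u x i) :
    Continuous fun x ↦ fM (m x) (u x) := by
  refine Continuous.matrix_det (continuous_matrix fun i j ↦ ?_)
  fin_cases i <;> fin_cases j <;>
    first
    | exact continuous_const
    | exact hu _
    | exact ((hm _).sub (hm _)).norm.pow 2

/-- The placements `(t, R)` of a drone for which `f_M` vanishes on the squared distances between
the `i`-th microphone `R (a i) + t` and the point `s i`. Rotations are encoded as matrices, so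
`R ∈ SO(3)` is part of the condition. -/
def badPlacements (a s : Fin 4 → E3) : Set (E3 × Matrix (Fin 3) (Fin 3) ℝ) :=
  {p | p.2 ∈ Matrix.specialOrthogonalGroup (Fin 3) ℝ ∧
    fM (fun i ↦ Matrix.toEuclideanLin p.2 (a i) + p.1)
      (fun i ↦ ‖s i - (Matrix.toEuclideanLin p.2 (a i) + p.1)‖ ^ 2) = 0}

theorem isClosed_badPlacements (a s : Fin 4 → E3) : IsClosed (badPlacements a s) := by
  have h_mic (i : Fin 4) : Continuous fun p : E3 × Matrix (Fin 3) (Fin 3) ℝ ↦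
      Matrix.toEuclideanLin p.2 (a i) + p.1 :=
    ((continuous_toEuclideanLin_apply (a i)).comp continuous_snd).add continuous_fst
  exact ((isClosed_specialOrthogonalGroup (Fin 3)).preimage continuous_snd).inter <|
    isClosed_singleton.preimage <|
      continuous_fM_comp h_mic fun i ↦ (continuous_const.sub (h_mic i)).norm.pow 2

theorem prod_badPlacements_eq_zero {a s : Fin 4 → E3} (ha : AffineIndependent ℝ a)
    (hs : ¬ ∀ i j, s i = s j) {μ : Measure (Matrix (Fin 3) (Fin 3) ℝ)} [SFinite μ]
    (hinv : ∀ g ∈ Matrix.specialOrthogonalGroup (Fin 3) ℝ, μ.map (fun R ↦ g * R) = μ) :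
    ((volume : Measure E3).prod μ) (badPlacements a s) = 0 := by
  obtain ⟨φ, hφ⟩ : ∃ φ : E3 →ᵃ[ℝ] E3, ∀ i, φ (a i) = s i := by
    obtain ⟨a, rfl⟩ := exists_affineBasis_coe_eq ha (by simp)
    exact exists_affineMap_apply_eq a s
  have h_adj : φ.linear.adjoint ≠ 0 := fun h ↦ hs fun i j ↦ by
    have h_lin : φ.linear = 0 := by simpa using h
    rw [← hφ, ← hφ, ← sub_eq_zero, ← vsub_eq_sub, ← φ.linearMap_vsub, h_lin, LinearMap.zero_apply]
  obtain ⟨e, he⟩ : ∃ e, φ.linear.adjoint e ≠ 0 := DFunLike.exists_ne h_adj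
  have h_generic : ∀ᵐ R ∂μ, ⟪e, Matrix.toEuclideanLin R (φ.linear.adjoint e)⟫ ≠
      ‖φ.linear.adjoint e‖ ^ 2 / 2 :=
    measure_eq_zero_iff_ae_notMem.1 <|
      measure_setOf_inner_toEuclideanLin_eq_const_eq_zero hinv e _ (by positivity)
  rw [Measure.prod_apply_symm (isClosed_badPlacements a s).measurableSet]
  refine lintegral_eq_zero_of_ae_eq_zero ?_
  filter_upwards [h_generic] with R hR
  by_cases hSO : R ∈ Matrix.specialOrthogonalGroup (Fin 3) ℝ
  · obtain ⟨T, hT⟩ := exists_linearIsometryEquiv_eq_toEuclideanLin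
      (Matrix.mem_specialOrthogonalGroup_iff.1 hSO).1
    have hTR (x : E3) : Matrix.toEuclideanLin R x = T x := by rw [← hT]; rfl
    have h_ne : 2 * ⟪T (φ.linear.adjoint e), e⟫ ≠ ‖φ.linear.adjoint e‖ ^ 2 := fun h ↦ hR <| by
      rw [hTR, real_inner_comm]
      linarith
    refine measure_mono_null (fun t ht ↦ ?_)
      (volume_setOf_fM_translate_eq_zero ha T.toLinearIsometry φ h_ne)
    simpa [hφ, ← hTR] using ht.2
  · simp [badPlacements, hSO]

theorem eq_perpBisector_reflection {V P : Type*} [NormedAddCommGroup V] [InnerProductSpace ℝ V]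
    [FiniteDimensional ℝ V] [MetricSpace P] [NormedAddTorsor V P] {W : AffineSubspace ℝ P}
    [Nonempty W] (hW : Module.finrank ℝ W.direction + 1 = Module.finrank ℝ V) {L : P}
    (hL : L ∉ W) :
    W = AffineSubspace.perpBisector L (EuclideanGeometry.reflection W L) := by
  have h_le : W ≤ AffineSubspace.perpBisector L (EuclideanGeometry.reflection W L) :=
    fun x hx ↦ AffineSubspace.mem_perpBisector_iff_dist_eq.2
      (EuclideanGeometry.dist_reflection_eq_of_mem W hx L).symm
  have h_ne : EuclideanGeometry.reflection W L -ᵥ L ≠ 0 := fun h ↦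
    hL ((EuclideanGeometry.reflection_eq_self_iff L).1 (vsub_eq_zero_iff_eq.1 h))
  have : Fact (Module.finrank ℝ V = Module.finrank ℝ W.direction + 1) := ⟨hW.symm⟩
  refine AffineSubspace.eq_of_direction_eq_of_nonempty_of_le ?_
    (Set.nonempty_coe_sort.1 ‹_›) h_le
  refine Submodule.eq_of_le_of_finrank_eq (AffineSubspace.direction_le h_le) ?_
  rw [AffineSubspace.direction_perpBisector,
    Submodule.finrank_orthogonal_span_singleton (n := Module.finrank ℝ W.direction) h_ne]

theorem injOn_reflAff (L : E3) : Set.InjOn (reflAff · L) {W | IsPlane W ∧ L ∉ W} := by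
  have h_bisector {W : AffineSubspace ℝ E3} (hW : IsPlane W ∧ L ∉ W) :
      W = AffineSubspace.perpBisector L (reflAff W L) := by
    have : Nonempty W := hW.1.1.to_subtype
    rw [reflAff, dif_pos this]
    exact eq_perpBisector_reflection (by rw [hW.1.2]; simp) hW.2
  intro W hW W' hW' h
  rw [h_bisector hW, h_bisector hW']
  exact congrArg _ h

theorem bad_drone_placements_measure_zero_fixed_source_general
    {𝒲 : Set (AffineSubspace ℝ E3)} (hcount : 𝒲.Countable) (hplane : ∀ W ∈ 𝒲, IsPlane W)
    {L : E3} (hL : ∀ W ∈ 𝒲, L ∉ W)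
    {mini : Fin 4 → E3} (hm : AffineIndependent ℝ mini)
    (μ : Measure (Matrix (Fin 3) (Fin 3) ℝ)) [SFinite μ]
    (hinv : ∀ g ∈ Matrix.specialOrthogonalGroup (Fin 3) ℝ, μ.map (fun R ↦ g * R) = μ) :
    ((volume : Measure E3).prod μ)
      {p : E3 × Matrix (Fin 3) (Fin 3) ℝ |
        p.2 ∈ Matrix.specialOrthogonalGroup (Fin 3) ℝ ∧
        ∃ W : Fin 4 → AffineSubspace ℝ E3, (∀ i, W i ∈ 𝒲) ∧ (¬ ∀ i j, W i = W j) ∧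
          fM (fun i ↦ Matrix.toEuclideanLin p.2 (mini i) + p.1)
            (fun i ↦ ‖reflAff (W i) L - (Matrix.toEuclideanLin p.2 (mini i) + p.1)‖ ^ 2)
            = 0} = 0 := by
  have h_tuples : {W : Fin 4 → AffineSubspace ℝ E3 | ∀ i, W i ∈ 𝒲}.Countable :=
    Set.countable_pi fun _ ↦ hcount
  have h_tuple (W : Fin 4 → AffineSubspace ℝ E3) (hW : ∀ i, W i ∈ 𝒲)
      (hne : ¬ ∀ i j, W i = W j) :
      ((volume : Measure E3).prod μ) (badPlacements mini fun i ↦ reflAff (W i) L) = 0 :=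
    prod_badPlacements_eq_zero hm (fun h ↦ hne fun i j ↦ injOn_reflAff L
      ⟨hplane _ (hW i), hL _ (hW i)⟩ ⟨hplane _ (hW j), hL _ (hW j)⟩ (h i j)) hinv
  have h_union : ((volume : Measure E3).prod μ)
      (⋃ W ∈ {W : Fin 4 → AffineSubspace ℝ E3 | (∀ i, W i ∈ 𝒲) ∧ ¬ ∀ i j, W i = W j},
        badPlacements mini fun i ↦ reflAff (W i) L) = 0 :=
    (measure_biUnion_null_iff (h_tuples.mono fun _ h ↦ h.1)).2 fun W hW ↦ h_tuple W hW.1 hW.2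
  refine measure_mono_null ?_ h_union
  rintro p ⟨hp, W, hW, hne, hf⟩
  exact Set.mem_biUnion (x := W) ⟨hW, hne⟩ ⟨hp, hf⟩

/-- Theorem 2.1 (fixed loudspeaker): for a finite set of walls, a loudspeaker `L` not on
any wall, and non-coplanar microphones mounted on a drone, the set of drone placements
`(t, R) ∈ ℝ³ × SO(3)` for which the echo sorting criterion vanishes for some walls that
are not all equal has measure zero with respect to the product of the Lebesgue measure
on ℝ³ and the Haar probability measure on SO(3) (encoded as a left-invariant probability
measure concentrated on SO(3) inside the space of 3×3 matrices). -/
theorem bad_drone_placements_measure_zero_fixed_source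
    (𝒲 : Set (AffineSubspace ℝ E3)) (hfin : 𝒲.Finite) (hplane : ∀ W ∈ 𝒲, IsPlane W)
    (L : E3) (hL : ∀ W ∈ 𝒲, L ∉ W)
    (mini : Fin 4 → E3) (hm : AffineIndependent ℝ mini)
    (μ : Measure (Matrix (Fin 3) (Fin 3) ℝ)) [IsProbabilityMeasure μ]
    (hsupp : μ ((Matrix.specialOrthogonalGroup (Fin 3) ℝ : Set (Matrix (Fin 3) (Fin 3) ℝ))ᶜ) = 0)
    (hinv : ∀ g ∈ Matrix.specialOrthogonalGroup (Fin 3) ℝ,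
      μ.map (fun R => g * R) = μ) :
    ((volume : Measure E3).prod μ)
      {p : E3 × Matrix (Fin 3) (Fin 3) ℝ |
        p.2 ∈ Matrix.specialOrthogonalGroup (Fin 3) ℝ ∧
        ∃ W : Fin 4 → AffineSubspace ℝ E3, (∀ i, W i ∈ 𝒲) ∧ (¬ ∀ i j, W i = W j) ∧
          fM (fun i => Matrix.toEuclideanLin p.2 (mini i) + p.1)
            (fun i => ‖reflAff (W i) L - (Matrix.toEuclideanLin p.2 (mini i) + p.1)‖ ^ 2)
            = 0} = 0 :=
  bad_drone_placements_measure_zero_fixed_source_general hfin.countable hplane hL hm μ hinv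

end
end

section
/- Let W₁, W₂, W₃, W₄ ⊂ ℝ³ be four affine planes that are not all equal, let m₁^ini,…,m₄^ini ∈ ℝ³ be non-coplanar points, and let L_ini ∈ ℝ³. Then there exist a rotation R ∈ SO(3) and a translation t ∈ ℝ³ such that, setting m_i := R m_i^ini + t and L := R L_ini + t, one has f_M(‖ref_{W₁}(L) − m₁‖², ‖ref_{W₂}(L) − m₂‖², ‖ref_{W₃}(L) − m₃‖², ‖ref_{W₄}(L) − m₄‖²) ≠ 0, where f_M is formed from the pairwise squared distances of m₁,…,m₄. -/
open scoped RealInnerProductSpace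

noncomputable section

/-!
For affinely independent microphones `m i`, the bordered Cayley–Menger determinant `fM m u` can
vanish only if one point `x` has squared distance `u i` to every `m i`. So suppose that, for every
placement, such a phantom source `x` mimics all four mirror images of the loudspeaker.

Fix the orientation and let `L = k • l`, with microphones `L + b i`. Then `y = x - L` satisfies
`‖y‖² - 2 ⟪y, b i⟫ = 4 (⟪n i, L⟫ - c i) (⟪n i, L⟫ - c i + ⟪n i, b i⟫)`, where the `i`-th wall is
`⟪n i, x⟫ = c i` with `‖n i‖ = 1`. Write `∇ u` for the gradient of the affine function with value
`u i` at `b i`. Differences over `i` determine `y` as a gradient that is polynomial in `k`, and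
comparing coefficients gives, with `B j = ⟪n j, l⟫ (⟪n j, b j⟫ - 2 c j)`, that
`‖∇ B‖² = ⟪n i, l⟫²` for all `i`. Taking `l = n j` shows that all normals agree up to sign.
After normalising them to a common `ν`, taking `l = ν` gives `‖ν - 2 ∇ c‖² = 1`, that is,
`‖∇ c‖² = ⟪ν, ∇ c⟫`. Since `∇ c` turns with the microphones, some rotation makes the right-hand
side nonpositive; hence `∇ c = 0`, all offsets agree, and the walls coincide.
-/

section CayleyMenger

variable {ι V P : Type*} [Fintype ι] [NormedAddCommGroup V] [InnerProductSpace ℝ V] [MetricSpace P]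
  [NormedAddTorsor V P]

lemma weights_eq_zero_of_sum_mul_dist_sq_eq_zero {p : ι → P} (hp : AffineIndependent ℝ p)
    {w : ι → ℝ} (hw : ∑ i, w i = 0)
    (h : ∑ i, ∑ j, w i * w j * dist (p i) (p j) ^ 2 = 0) : w = 0 := by
  have hinner := EuclideanGeometry.inner_weightedVSub p hw p hw
  simp only [← sq, h, neg_zero, zero_div, inner_self_eq_zero] at hinner
  exact funext fun i => hp Finset.univ w hw hinner i (Finset.mem_univ i)

lemma dist_affineCombination_sq (p : ι → P) {w : ι → ℝ} (hw : ∑ i, w i = 1) (i : ι) :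
    dist (Finset.univ.affineCombination ℝ p w) (p i) ^ 2 =
      ∑ j, w j * dist (p i) (p j) ^ 2 - (∑ j, ∑ k, w j * w k * dist (p j) (p k) ^ 2) / 2 := by
  classical
  have hsingle : ∑ j, (Pi.single i 1 : ι → ℝ) j = 1 := by simp
  have hvertex := Finset.univ.affineCombination_of_eq_one_of_eq_zero (k := ℝ) (Pi.single i 1) p
    (Finset.mem_univ i) (Pi.single_eq_same i 1) fun j _ hj => Pi.single_eq_of_ne hj 1
  have hdist := EuclideanGeometry.dist_affineCombination p hw hsingle
  rw [hvertex] at hdist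
  simp only [← sq, Pi.sub_apply, sub_mul, mul_sub, Finset.sum_sub_distrib, Pi.single_apply,
    mul_ite, ite_mul, mul_one, one_mul, mul_zero, zero_mul, Finset.sum_ite_eq', Finset.mem_univ,
    if_true, dist_self, ne_eq, OfNat.ofNat_ne_zero, not_false_eq_true, zero_pow] at hdist
  simp only [Finset.sum_ite_irrel, Finset.sum_const_zero, Finset.sum_ite_eq', Finset.mem_univ,
    if_true, dist_comm _ (p i)] at hdist
  rw [dist_comm, hdist]
  ring

-- The hypotheses say that `(α, w, γ)` is a nonzero kernel vector of the Cayley–Menger matrix of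
-- `p` bordered by the squared distances `u`; the point found is `∑ i, (-w i / α) • p i`.
lemma exists_dist_sq_eq_of_kernel {p : ι → P} (hp : AffineIndependent ℝ p) {u w : ι → ℝ}
    {α γ : ℝ} (hne : ¬(α = 0 ∧ w = 0 ∧ γ = 0)) (hfirst : ∑ j, w j * u j + γ = 0)
    (hrow : ∀ i, α * u i + ∑ j, w j * dist (p i) (p j) ^ 2 + γ = 0) (hlast : α + ∑ j, w j = 0) :
    ∃ x, ∀ i, dist x (p i) ^ 2 = u i := by
  set q := ∑ i, ∑ j, w i * w j * dist (p i) (p j) ^ 2 with hq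
  have hpair : q = 2 * α * γ := by
    have hsum : ∑ i, w i * (α * u i + ∑ j, w j * dist (p i) (p j) ^ 2 + γ) = 0 :=
      Finset.sum_eq_zero fun i _ => by rw [hrow i, mul_zero]
    have hexpand : ∑ i, w i * (α * u i + ∑ j, w j * dist (p i) (p j) ^ 2 + γ) =
        α * ∑ i, w i * u i + q + (∑ i, w i) * γ := by
      simp only [hq, mul_add, Finset.sum_add_distrib, Finset.mul_sum, Finset.sum_mul, mul_assoc,
        mul_left_comm α]
    linear_combination hsum - hexpand - α * hfirst - γ * hlast
  have hα : α ≠ 0 := by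
    rintro rfl
    have hw : w = 0 := weights_eq_zero_of_sum_mul_dist_sq_eq_zero hp (by linarith) (by
      rw [← hq, hpair]; ring)
    exact hne ⟨rfl, hw, by simpa [hw] using hfirst⟩
  have hone : ∑ i, (-α⁻¹ * w i) = 1 := by
    rw [← Finset.mul_sum]
    field_simp
    linarith
  refine ⟨Finset.univ.affineCombination ℝ p fun i => -α⁻¹ * w i, fun i => ?_⟩
  have hlin : ∑ j, -α⁻¹ * w j * dist (p i) (p j) ^ 2 =
      -α⁻¹ * ∑ j, w j * dist (p i) (p j) ^ 2 := by
    simp only [Finset.mul_sum, mul_assoc]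
  have hquad : ∑ j, ∑ k, -α⁻¹ * w j * (-α⁻¹ * w k) * dist (p j) (p k) ^ 2 = α⁻¹ ^ 2 * q := by
    simp only [hq, Finset.mul_sum]
    exact Finset.sum_congr rfl fun j _ => Finset.sum_congr rfl fun k _ => by ring
  rw [dist_affineCombination_sq p hone, hlin, hquad, hpair]
  field_simp
  linear_combination -hrow i

end CayleyMenger

section AffineGradient

variable {ι V : Type*} [Fintype ι] [NormedAddCommGroup V] [InnerProductSpace ℝ V]
  [FiniteDimensional ℝ V]

/-- The gradient of the affine function on `V` that takes the value `c i` at the vertex `b i`,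
as a linear function of `c`. -/
def affineGradient (b : AffineBasis ι ℝ V) : (ι → ℝ) →ₗ[ℝ] V :=
  Fintype.linearCombination ℝ fun i =>
    (InnerProductSpace.toDual ℝ V).symm (b.coord i).linear.toContinuousLinearMap

variable (b : AffineBasis ι ℝ V)

lemma inner_affineGradient_sub (c : ι → ℝ) (i j : ι) :
    ⟪affineGradient b c, b i - b j⟫ = c i - c j := by
  classical
  have hcoord (k : ι) : (b.coord k).linear (b i - b j) =
      (if k = i then 1 else 0) - if k = j then 1 else 0 := by
    rw [← vsub_eq_sub, AffineMap.linearMap_vsub, b.coord_apply, b.coord_apply, vsub_eq_sub]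
  simp [affineGradient, Fintype.linearCombination_apply, sum_inner, real_inner_smul_left, hcoord,
    mul_sub, -AffineBasis.linear_eq_sumCoords]

lemma eq_affineGradient {c : ι → ℝ} {y : V} (h : ∀ i j, ⟪y, b i - b j⟫ = c i - c j) :
    y = affineGradient b c := by
  refine ext_inner_right ℝ fun z => ?_
  have hz : z ∈ vectorSpan ℝ (Set.range b) := by
    rw [← direction_affineSpan, b.tot, AffineSubspace.direction_top]
    exact Submodule.mem_top
  rw [vectorSpan_def] at hz
  induction hz using Submodule.span_induction with
  | mem z hz =>
    obtain ⟨_, ⟨i, rfl⟩, _, ⟨j, rfl⟩, rfl⟩ := hz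
    exact (h i j).trans (inner_affineGradient_sub b c i j).symm
  | zero => simp
  | add z z' _ _ hz hz' => rw [inner_add_right, inner_add_right, hz, hz']
  | smul r z _ hz => rw [real_inner_smul_right, real_inner_smul_right, hz]

lemma affineGradient_inner (y : V) : affineGradient b (fun i => ⟪y, b i⟫) = y :=
  (eq_affineGradient b fun i j => inner_sub_right y (b i) (b j)).symm

lemma affineGradient_smul (e : V ≃ₗᵢ[ℝ] V) (c : ι → ℝ) :
    affineGradient (e.toLinearEquiv • b) c = e (affineGradient b c) := by
  refine (eq_affineGradient _ fun i j => ?_).symm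
  change ⟪e (affineGradient b c), e (b i) - e (b j)⟫ = c i - c j
  rw [← map_sub, e.inner_map_map, inner_affineGradient_sub]

lemma quartic_coeff_eq_zero {c₀ c₁ c₂ c₃ c₄ : ℝ}
    (h : ∀ k : ℝ, c₄ * k ^ 4 + c₃ * k ^ 3 + c₂ * k ^ 2 + c₁ * k + c₀ = 0) : c₄ = 0 ∧ c₂ = 0 := by
  constructor <;> linarith [h 0, h 1, h (-1), h 2, h (-2)]

-- Differences over `i` force `y = -(k² ∇A + k ∇B + ∇C) / 2`, so `‖y‖² - 2 ⟪y, b i⟫` is a quartic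
-- in `k`. Its leading coefficient `‖∇A‖² / 4` vanishes, and its coefficient at `k²` is then
-- `‖∇B‖² / 4`.
lemma norm_affineGradient_sq_eq_of_quadratic_family {A B C : ι → ℝ}
    (h : ∀ k : ℝ, ∃ y : V, ∀ i, ‖y‖ ^ 2 - 2 * ⟪y, b i⟫ = A i * k ^ 2 + B i * k + C i) (i : ι) :
    ‖affineGradient b B‖ ^ 2 = 4 * A i := by
  set a := affineGradient b A
  set β := affineGradient b B
  set γ := affineGradient b C
  have hy (k : ℝ) : ‖k ^ 2 • a + k • β + γ‖ ^ 2 + 4 * ⟪k ^ 2 • a + k • β + γ, b i⟫ =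
      4 * (A i * k ^ 2 + B i * k + C i) := by
    obtain ⟨y, hy⟩ := h k
    have hgrad : (-2 : ℝ) • y = k ^ 2 • a + k • β + γ := by
      rw [← map_smul, ← map_smul, ← map_add, ← map_add]
      refine eq_affineGradient b fun i j => ?_
      simp only [real_inner_smul_left, inner_sub_right, Pi.add_apply, Pi.smul_apply, smul_eq_mul]
      linear_combination hy i - hy j
    rw [← hgrad, norm_smul, real_inner_smul_left, mul_pow, Real.norm_eq_abs, sq_abs]
    linear_combination 4 * hy i
  obtain ⟨hquartic, hquadratic⟩ := quartic_coeff_eq_zero (c₄ := ‖a‖ ^ 2) (c₃ := 2 * ⟪a, β⟫)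
    (c₂ := ‖β‖ ^ 2 + 2 * ⟪a, γ⟫ + 4 * ⟪a, b i⟫ - 4 * A i)
    (c₁ := 2 * ⟪β, γ⟫ + 4 * ⟪β, b i⟫ - 4 * B i) (c₀ := ‖γ‖ ^ 2 + 4 * ⟪γ, b i⟫ - 4 * C i)
    fun k => by
      have := hy k
      simp only [norm_add_sq_real, inner_add_left, real_inner_smul_left, real_inner_smul_right,
        norm_smul, mul_pow, Real.norm_eq_abs, sq_abs] at this
      linear_combination this
  have ha : a = 0 := by simpa using hquartic
  simp only [ha, inner_zero_left] at hquadratic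
  linarith

end AffineGradient

section Hyperplane

variable {V : Type*} [NormedAddCommGroup V] [InnerProductSpace ℝ V]

/-- The affine subspace `{x | ⟪n, x⟫ = c}`, a hyperplane with normal vector `n` when `n ≠ 0`. -/
def hyperplane (n : V) (c : ℝ) : AffineSubspace ℝ V :=
  (affineSpan ℝ {c}).comap (innerₗ V n).toAffineMap

/-- The mirror image of `L` in `hyperplane n c`, by the formula valid for a unit normal `n`. -/
def mirrorImage (n : V) (c : ℝ) (L : V) : V :=
  L - (2 * (⟪n, L⟫ - c)) • n

@[simp]
lemma mem_hyperplane {n : V} {c : ℝ} {x : V} : x ∈ hyperplane n c ↔ ⟪n, x⟫ = c := by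
  simp [hyperplane, AffineSubspace.mem_comap]

lemma direction_hyperplane {n : V} {c : ℝ} {p : V} (hp : p ∈ hyperplane n c) :
    (hyperplane n c).direction = (ℝ ∙ n)ᗮ := by
  ext v
  rw [← AffineSubspace.vadd_mem_iff_mem_direction v hp,
    Submodule.mem_orthogonal_singleton_iff_inner_right, mem_hyperplane, vadd_eq_add,
    inner_add_right, mem_hyperplane.mp hp, add_eq_right]

lemma exists_offset_of_eq_or_eq_neg {n ν : V} (h : n = ν ∨ n = -ν) (c : ℝ) :
    ∃ d, hyperplane n c = hyperplane ν d ∧ mirrorImage n c = mirrorImage ν d := by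
  rcases h with rfl | rfl
  · exact ⟨c, rfl, rfl⟩
  · refine ⟨-c, ?_, funext fun L => ?_⟩
    · ext x
      rw [mem_hyperplane, mem_hyperplane, inner_neg_left, neg_eq_iff_eq_neg]
    · rw [mirrorImage, mirrorImage, inner_neg_left]
      module

lemma exists_eq_hyperplane [FiniteDimensional ℝ V] {W : AffineSubspace ℝ V}
    (hne : (W : Set V).Nonempty) (hW : Module.finrank ℝ W.direction + 1 = Module.finrank ℝ V) :
    ∃ (n : V) (c : ℝ), ‖n‖ = 1 ∧ W = hyperplane n c := by
  obtain ⟨p, hp⟩ := hne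
  have hperp : Module.finrank ℝ W.directionᗮ = 1 := by
    have := W.direction.finrank_add_finrank_orthogonal
    lia
  have : Nontrivial W.directionᗮ := Module.nontrivial_of_finrank_pos (R := ℝ) (by lia)
  obtain ⟨⟨n, hn_perp⟩, hn⟩ := exists_norm_eq W.directionᗮ zero_le_one
  have hn_ne : n ≠ 0 := by
    rintro rfl
    simp at hn
  have hspan : ℝ ∙ n = W.directionᗮ := Submodule.eq_of_le_of_finrank_eq
    ((Submodule.span_singleton_le_iff_mem _ _).mpr hn_perp)
    ((finrank_span_singleton hn_ne).trans hperp.symm)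
  have hp' : p ∈ hyperplane n ⟪n, p⟫ := mem_hyperplane.mpr rfl
  refine ⟨n, ⟪n, p⟫, hn, AffineSubspace.ext_of_direction_eq ?_ ⟨p, hp, hp'⟩⟩
  rw [direction_hyperplane hp', hspan, Submodule.orthogonal_orthogonal]

lemma reflection_hyperplane {n : V} (hn : ‖n‖ = 1) (c : ℝ) [Nonempty (hyperplane n c)]
    [(hyperplane n c).direction.HasOrthogonalProjection] (L : V) :
    EuclideanGeometry.reflection (hyperplane n c) L = mirrorImage n c L := by
  set foot := L - (⟪n, L⟫ - c) • n with hfoot_def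
  have hfoot : foot ∈ hyperplane n c := by
    rw [mem_hyperplane, hfoot_def, inner_sub_right, real_inner_smul_right,
      real_inner_self_eq_norm_sq, hn]
    ring
  have hnormal : (⟪n, L⟫ - c) • n ∈ (hyperplane n c).directionᗮ := by
    rw [direction_hyperplane hfoot]
    exact Submodule.le_orthogonal_orthogonal _
      (Submodule.smul_mem _ _ (Submodule.mem_span_singleton_self n))
  have hL : L = (⟪n, L⟫ - c) • n +ᵥ foot := by simp [hfoot_def]
  conv_lhs => rw [hL]
  rw [EuclideanGeometry.reflection_orthogonal_vadd hfoot hnormal, mirrorImage, hfoot_def,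
    vadd_eq_add]
  module

lemma reflAff_hyperplane {n : E3} (hn : ‖n‖ = 1) (c : ℝ) (L : E3) :
    reflAff (hyperplane n c) L = mirrorImage n c L := by
  have hne : Nonempty (hyperplane n c) :=
    ⟨c • n, mem_hyperplane.mpr (by simp [real_inner_smul_right, hn])⟩
  rw [reflAff, dif_pos hne, reflection_hyperplane hn]

end Hyperplane

section PhantomSource

variable {ι V : Type*} [NormedAddCommGroup V] [InnerProductSpace ℝ V]

/-- A single point `x` explains the echoes of a source `L` that the microphone `m i` receives from
the wall `hyperplane (n i) (c i)`: its distance to `m i` is that of the `i`-th mirror image of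
`L`, for every `i`. -/
def HasPhantomSource (n : ι → V) (c : ι → ℝ) (m : ι → V) (L : V) : Prop :=
  ∃ x, ∀ i, ‖x - m i‖ ^ 2 = ‖mirrorImage (n i) (c i) L - m i‖ ^ 2

lemma hasPhantomSource_of_fM_eq_zero {n : Fin 4 → E3} (hn : ∀ i, ‖n i‖ = 1) {c : Fin 4 → ℝ}
    {m : Fin 4 → E3} (hm : AffineIndependent ℝ m) {L : E3}
    (h : fM m (fun i => ‖reflAff (hyperplane (n i) (c i)) L - m i‖ ^ 2) = 0) :
    HasPhantomSource n c m L := by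
  simpa only [HasPhantomSource, reflAff_hyperplane (hn _)] using
    exists_norm_sub_sq_eq_of_fM_eq_zero hm h

lemma norm_mirrorImage_sub_sq {n : V} (hn : ‖n‖ = 1) (c : ℝ) (a L : V) :
    ‖mirrorImage n c L - (L + a)‖ ^ 2 =
      ‖a‖ ^ 2 + 4 * (⟪n, L⟫ - c) * (⟪n, L⟫ - c + ⟪n, a⟫) := by
  have h : mirrorImage n c L - (L + a) = -(a + (2 * (⟪n, L⟫ - c)) • n) := by
    rw [mirrorImage]
    abel
  rw [h, norm_neg, norm_add_sq_real, norm_smul, hn, real_inner_smul_right, real_inner_comm n a,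
    mul_one, Real.norm_eq_abs, sq_abs]
  ring

variable [FiniteDimensional ℝ V] (b : AffineBasis ι ℝ V) {c : ι → ℝ}

lemma norm_affineGradient_sq_of_hasPhantomSource [Fintype ι] {n : ι → V}
    (hn : ∀ i, ‖n i‖ = 1) {l : V}
    (h : ∀ k : ℝ, HasPhantomSource n c (fun i => k • l + b i) (k • l)) (i : ι) :
    ‖affineGradient b fun j => ⟪n j, l⟫ * (⟪n j, b j⟫ - 2 * c j)‖ ^ 2 = ⟪n i, l⟫ ^ 2 := by
  have hgrad := norm_affineGradient_sq_eq_of_quadratic_family b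
    (A := fun j => 4 * ⟪n j, l⟫ ^ 2)
    (B := (4 : ℝ) • fun j => ⟪n j, l⟫ * (⟪n j, b j⟫ - 2 * c j))
    (C := fun j => 4 * (c j ^ 2 - c j * ⟪n j, b j⟫)) (fun k => ?_) i
  · rw [map_smul, norm_smul, mul_pow, Real.norm_eq_abs, sq_abs] at hgrad
    linarith
  · obtain ⟨x, hx⟩ := h k
    refine ⟨x - k • l, fun j => ?_⟩
    have hxj : ‖x - (k • l + b j)‖ ^ 2 = ‖mirrorImage (n j) (c j) (k • l) - (k • l + b j)‖ ^ 2 :=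
      hx j
    rw [norm_mirrorImage_sub_sq (hn j), ← sub_sub, norm_sub_sq_real, real_inner_smul_right] at hxj
    rw [Pi.smul_apply, smul_eq_mul]
    linear_combination hxj

lemma normal_eq_or_eq_neg_of_hasPhantomSource {n : ι → V} (hn : ∀ i, ‖n i‖ = 1)
    (h : ∀ L, HasPhantomSource n c (fun i => L + b i) L) (i j : ι) : n i = n j ∨ n i = -n j := by
  have := b.finite
  cases nonempty_fintype ι
  have hgrad := norm_affineGradient_sq_of_hasPhantomSource b hn (l := n j) (fun k => h (k • n j))
  have hsq : ⟪n i, n j⟫ ^ 2 = 1 ^ 2 := by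
    rw [← hgrad i, hgrad j, real_inner_self_eq_norm_sq, hn, one_pow, one_pow]
  exact (sq_eq_sq_iff_eq_or_eq_neg.mp hsq).imp
    (inner_eq_one_iff_of_norm_eq_one (hn i) (hn j)).mp
    (inner_eq_neg_one_iff_of_norm_eq_one (hn i) (hn j)).mp

lemma norm_affineGradient_offset_sq_of_hasPhantomSource [Fintype ι] {ν : V} (hν : ‖ν‖ = 1)
    (h : ∀ L, HasPhantomSource (fun _ => ν) c (fun i => L + b i) L) :
    ‖affineGradient b c‖ ^ 2 = ⟪ν, affineGradient b c⟫ := by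
  obtain ⟨i⟩ := b.nonempty
  have hgrad := norm_affineGradient_sq_of_hasPhantomSource b (fun _ => hν) (fun k => h (k • ν)) i
  have hsplit : affineGradient b (fun j => ⟪ν, ν⟫ * (⟪ν, b j⟫ - 2 * c j)) =
      ν - (2 : ℝ) • affineGradient b c := by
    conv_rhs => rw [← affineGradient_inner b ν, ← map_smul, ← map_sub]
    congr 1
    ext j
    simp [hν]
  rw [hsplit, norm_sub_sq_real, norm_smul, mul_pow, real_inner_smul_right,
    real_inner_self_eq_norm_sq, hν] at hgrad
  norm_num at hgrad
  linarith

theorem hyperplane_eq_of_hasPhantomSource {n : ι → V} (hn : ∀ i, ‖n i‖ = 1)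
    (h : ∀ v w : V, ∃ e : V ≃ₗᵢ[ℝ] V, ⟪v, e w⟫ ≤ 0 ∧
      ∀ L, HasPhantomSource n c (fun i => L + e (b i)) L) (i j : ι) :
    hyperplane (n i) (c i) = hyperplane (n j) (c j) := by
  have := b.finite
  cases nonempty_fintype ι
  obtain ⟨e₀, -, he₀⟩ := h 0 0
  have hnormal (k : ι) : n k = n j ∨ n k = -n j :=
    normal_eq_or_eq_neg_of_hasPhantomSource (e₀.toLinearEquiv • b) hn he₀ k j
  choose d hplane hmirror using fun k => exists_offset_of_eq_or_eq_neg (hnormal k) (c k)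
  obtain ⟨e, he_nonpos, he⟩ := h (n j) (affineGradient b d)
  have hnorm := norm_affineGradient_offset_sq_of_hasPhantomSource (c := d)
    (e.toLinearEquiv • b) (hn j) fun L => by simpa only [HasPhantomSource, hmirror] using! he L
  rw [affineGradient_smul, e.norm_map] at hnorm
  have hgrad : affineGradient b d = 0 := by
    rw [← norm_eq_zero, ← sq_eq_zero_iff]
    exact le_antisymm (hnorm.trans_le he_nonpos) (sq_nonneg _)
  have hd : d i = d j := by
    rw [← sub_eq_zero, ← inner_affineGradient_sub b, hgrad, inner_zero_left]
  rw [hplane i, hplane j, hd]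

end PhantomSource

section Rotation

lemma exists_linearIsometryEquiv_eq_toEuclideanLin_s15 {ι 𝕜 : Type*} [Fintype ι] [DecidableEq ι]
    [RCLike 𝕜] {R : Matrix ι ι 𝕜} (hR : R ∈ Matrix.unitaryGroup ι 𝕜) :
    ∃ e : EuclideanSpace 𝕜 ι ≃ₗᵢ[𝕜] EuclideanSpace 𝕜 ι, ∀ x, e x = Matrix.toEuclideanLin R x :=
  ⟨Unitary.linearIsometryEquiv
    ⟨Matrix.toEuclideanCLM (n := ι) (𝕜 := 𝕜) R, Unitary.map_mem _ hR⟩, fun _ => rfl⟩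

/-- The rotation of `ℝ³` by the angle `π` about the `j`-th coordinate axis. -/
def halfTurn (j : Fin 3) : Matrix (Fin 3) (Fin 3) ℝ :=
  Matrix.diagonal fun i => if i = j then 1 else -1

lemma halfTurn_mem_specialOrthogonalGroup (j : Fin 3) :
    halfTurn j ∈ Matrix.specialOrthogonalGroup (Fin 3) ℝ := by
  rw [Matrix.mem_specialOrthogonalGroup_iff, Matrix.mem_orthogonalGroup_iff]
  constructor
  · fin_cases j <;> ext i k <;> fin_cases i <;> fin_cases k <;> simp [halfTurn]
  · fin_cases j <;> simp [halfTurn, Fin.prod_univ_three]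

lemma sum_halfTurn : ∑ j, halfTurn j = -1 := by
  ext i k
  fin_cases i <;> fin_cases k <;> simp [halfTurn, Fin.sum_univ_three]

-- The identity and the three half-turns sum to zero, so the four inner products do as well.
lemma exists_rotation_inner_nonpos (v w : E3) :
    ∃ R ∈ Matrix.specialOrthogonalGroup (Fin 3) ℝ, ⟪v, Matrix.toEuclideanLin R w⟫ ≤ 0 := by
  by_contra! hpos
  have hone : 0 < ⟪v, w⟫ := by simpa using hpos 1 (one_mem _)
  have hsum : ∑ j, ⟪v, Matrix.toEuclideanLin (halfTurn j) w⟫ = -⟪v, w⟫ := by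
    rw [← inner_sum, ← LinearMap.sum_apply, ← map_sum, sum_halfTurn]
    simp
  have hsum_pos : 0 < ∑ j, ⟪v, Matrix.toEuclideanLin (halfTurn j) w⟫ :=
    Finset.sum_pos (fun j _ => hpos _ (halfTurn_mem_specialOrthogonalGroup j)) Finset.univ_nonempty
  linarith

end Rotation

/-- Claim 2' (loudspeaker on the drone): for four affine planes not all equal,
non-coplanar initial microphone positions, and an initial loudspeaker position, there is
a placement (rotation `R ∈ SO(3)` and translation `t`) of the drone such that the echo
sorting criterion does not vanish. -/
theorem exists_good_placement_moving_source
    (W : Fin 4 → AffineSubspace ℝ E3) (hplane : ∀ i, IsPlane (W i))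
    (hW : ¬ ∀ i j, W i = W j)
    (mini : Fin 4 → E3) (hm : AffineIndependent ℝ mini) (Lini : E3) :
    ∃ (R : Matrix (Fin 3) (Fin 3) ℝ) (t : E3),
      R * R.transpose = 1 ∧ R.det = 1 ∧
      fM (fun i => Matrix.toEuclideanLin R (mini i) + t)
        (fun i => ‖reflAff (W i) (Matrix.toEuclideanLin R Lini + t)
          - (Matrix.toEuclideanLin R (mini i) + t)‖ ^ 2) ≠ 0 := by
  by_contra! hzero
  choose n c hn hnc using fun i => exists_eq_hyperplane (hplane i).1 (by simp [(hplane i).2])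
  obtain rfl : W = fun i => hyperplane (n i) (c i) := funext hnc
  let b : AffineBasis (Fin 4) ℝ E3 :=
    ⟨mini, hm, by simp [hm.affineSpan_eq_top_iff_card_eq_finrank_add_one]⟩
  let relative := -Lini +ᵥ b
  refine hW (hyperplane_eq_of_hasPhantomSource relative hn fun v w => ?_)
  obtain ⟨R, hR, hinner⟩ := exists_rotation_inner_nonpos v w
  obtain ⟨hR_orth, hR_det⟩ := Matrix.mem_specialOrthogonalGroup_iff.mp hR
  obtain ⟨e, he⟩ := exists_linearIsometryEquiv_eq_toEuclideanLin_s15 hR_orth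
  refine ⟨e, by rwa [he], fun L => ?_⟩
  have hzero_at := hzero R (L - e Lini) ((Matrix.mem_orthogonalGroup_iff _ _).mp hR_orth) hR_det
  have hmic (i : Fin 4) : e (mini i) + (L - e Lini) = L + e (relative i) := by
    change _ = L + e (-Lini + mini i)
    rw [map_add, map_neg]
    abel
  simp only [← he, add_sub_cancel, hmic] at hzero_at
  exact hasPhantomSource_of_fM_eq_zero hn (L +ᵥ e.toLinearEquiv • relative).ind hzero_at

end
end
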